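/- If n > max(3^d, 2^{d+1} + 1) φ, then the Kolmogorov distance D_S of the normalized number of isolated points S from the standard normal satisfies D_S ≤ ((n − μ_S)/(5 σ_S²)) · ( √( 11 (κ_d^+)²/σ_S + 5 √(η_S(n,ρ))/√n ) + 2 κ_d^+/√σ_S )². -/

import Mathlib

open MeasureTheory ProbabilityTheory Filter Set Metric
open scoped ENNReal NNReal BigOperators Topology Classical

noncomputable section

/-- Side length `n^(1/d)` of the cube `C_n` of volume `n` in dimension `d`. -/
def sideLen (d n : ℕ) : ℝ := (n : ℝ) ^ ((d : ℝ)⁻¹)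

/-- The cube `C_n = [0, L)^d`. -/
def box (d : ℕ) (L : ℝ) : Set (Fin d → ℝ) := Set.univ.pi fun _ => Set.Ico (0 : ℝ) L

/-- The Euclidean toroidal distance on the cube `[0, L)^d`. -/
def torDist {d : ℕ} (L : ℝ) (x y : Fin d → ℝ) : ℝ :=
  Real.sqrt (∑ i, (⨅ k : ℤ, |x i - y i - k * L|) ^ 2)

/-- The toroidal ball `B_r(x) = {y ∈ C_n : D(x,y) ≤ r}`. -/
def torBall {d : ℕ} (L : ℝ) (x : Fin d → ℝ) (r : ℝ) : Set (Fin d → ℝ) :=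
  {y ∈ box d L | torDist L x y ≤ r}

/-- Addition (translation) in the torus `[0, L)^d`. -/
def torAdd {d : ℕ} (L : ℝ) (y x : Fin d → ℝ) : Fin d → ℝ :=
  fun i => L * Int.fract ((y i + x i) / L)

/-- The uniform probability measure on the cube `[0, L)^d`. -/
def uniformBox (d : ℕ) (L : ℝ) : Measure (Fin d → ℝ) :=
  ((L.toNNReal ^ d)⁻¹ : ℝ≥0) • volume.restrict (box d L)

/-- The joint law of `n` independent points uniformly distributed on the cube `C_n`
of volume `n`; a point configuration is `ω : Fin n → (Fin d → ℝ)`, with `U_i = ω i`. -/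
def binppLaw (d n : ℕ) : Measure (Fin n → Fin d → ℝ) :=
  Measure.pi fun _ => uniformBox d (sideLen d n)

/-- The total covered volume `V` of the union of toroidal balls of radius `ρ`
centered at the `n` points. -/
def coveredVol (d n : ℕ) (ρ : ℝ) (ω : Fin n → Fin d → ℝ) : ℝ :=
  (volume (⋃ i, torBall (sideLen d n) (ω i) ρ)).toReal

/-- The number `S` of isolated points: indices `i` with `𝒰_n ∩ B_ρ(U_i) = {U_i}`. -/
def isolCount (d n : ℕ) (ρ : ℝ) (ω : Fin n → Fin d → ℝ) : ℝ :=
  ∑ i, if Set.range ω ∩ torBall (sideLen d n) (ω i) ρ = {ω i} then 1 else 0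

/-- `π_d`: the volume of the unit ball in `ℝ^d`. -/
def unitBallVol (d : ℕ) : ℝ :=
  (volume (Metric.closedBall (0 : EuclideanSpace ℝ (Fin d)) 1)).toReal

/-- `φ = π_d ρ^d`. -/
def phi (d : ℕ) (ρ : ℝ) : ℝ := unitBallVol d * ρ ^ d

/-- The standard normal cumulative distribution function. -/
def stdGaussCDF (t : ℝ) : ℝ := (gaussianReal 0 1 (Set.Iic t)).toReal

/-- The Kolmogorov distance `D_X` between the law of the standardized version of `X`
and the standard normal. -/
def kolDist {Ω : Type*} [MeasurableSpace Ω] (P : Measure Ω) (X : Ω → ℝ) : ℝ :=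
  ⨆ t : ℝ,
    |(P {ω | (X ω - ∫ x, X x ∂P) / Real.sqrt (variance X P) ≤ t}).toReal - stdGaussCDF t|

/-- A fixed unit vector in `ℝ^d` (junk value `0` if `d = 0`). -/
def unitVec (d : ℕ) : EuclideanSpace ℝ (Fin d) :=
  if h : 0 < d then EuclideanSpace.single (⟨0, h⟩ : Fin d) 1 else 0

/-- `ω_d(r)`: the volume of the union of two unit balls in `ℝ^d` whose centers are
at distance `r` apart. -/
def omegaVol (d : ℕ) (r : ℝ) : ℝ :=
  (volume (Metric.closedBall (0 : EuclideanSpace ℝ (Fin d)) 1 ∪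
      Metric.closedBall (r • unitVec d) 1)).toReal

/-- The integral `J_{r,d}(ρ) = d π_d ∫_0^r exp(-ρ^d ω_d(t)) t^{d-1} dt`. -/
def Jint (r : ℝ) (d : ℕ) (ρ : ℝ) : ℝ :=
  d * unitBallVol d * ∫ t in (0:ℝ)..r, Real.exp (-(ρ ^ d * omegaVol d t)) * t ^ (d - 1)

/-- The limiting variance density `g_V(ρ)`. -/
def gV (d : ℕ) (ρ : ℝ) : ℝ :=
  ρ ^ d * Jint 2 d ρ - (2 ^ d * phi d ρ + phi d ρ ^ 2) * Real.exp (-(2 * phi d ρ))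

/-- The limiting variance density `g_S(ρ)`. -/
def gS (d : ℕ) (ρ : ℝ) : ℝ :=
  Real.exp (-phi d ρ) - (1 + (2 ^ d - 2) * phi d ρ + phi d ρ ^ 2) * Real.exp (-(2 * phi d ρ))
    + ρ ^ d * (Jint 2 d ρ - Jint 1 d ρ)

/-- `κ_d`: the maximum number of closed unit balls in `ℝ^d` that can be packed so that
they all intersect a closed unit ball at the origin but are pairwise disjoint. -/
def kappa (d : ℕ) : ℕ :=
  sSup {k : ℕ | ∃ c : Fin k → EuclideanSpace ℝ (Fin d),
    (∀ i, (Metric.closedBall (c i) 1 ∩ Metric.closedBall 0 1).Nonempty) ∧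
    Pairwise fun i j => Disjoint (Metric.closedBall (c i) 1) (Metric.closedBall (c j) 1)}

/-- `η_V(n, ρ)`. -/
def etaV (d n : ℕ) (ρ : ℝ) : ℝ :=
  2 * phi d ρ ^ 2 * ((3 ^ d + 1) * phi d ρ + 1) ^ 2 *
      (1 + (2 ^ d + 1) * 6 ^ d * phi d ρ +
        ((2 * n - 6 ^ d * phi d ρ) / (n - 6 ^ d * phi d ρ)) * 6 ^ (2 * d) * phi d ρ ^ 2) +
    2 * phi d ρ ^ 4 *
      (3 * (4 ^ d + 2 ^ d) * phi d ρ +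
        3 * 4 ^ d * phi d ρ ^ 2 * ((2 * n - 3 * 2 ^ d * phi d ρ) / (n - 3 * 2 ^ d * phi d ρ)) +
        4 + 2 / n)

/-- `η_S(n, ρ)`. -/
def etaS (d n : ℕ) (ρ : ℝ) : ℝ :=
  2 * (1 + 2 * (kappa d : ℝ)) ^ 2 *
      (1 + (2 ^ d + 1) * 3 ^ d * phi d ρ +
        ((2 * n - 3 ^ d * phi d ρ) / (n - 3 ^ d * phi d ρ)) * 9 ^ d * phi d ρ ^ 2) +
    (((1 : ℝ) + kappa d) ^ 2 / 2) *
      ((2 ^ d + 2 * 3 ^ d + 3) * phi d ρ +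
        (2 ^ (d + 1) + 1) *
          ((2 * n - (2 ^ (d + 1) + 1) * phi d ρ) / (n - (2 ^ (d + 1) + 1) * phi d ρ)) *
          phi d ρ ^ 2 +
        (4 * n - 2) / (n - 1))

def gE (x : ℝ) : ℝ := Real.exp (-(1/2) * x ^ 2)

lemma gE_pos (x : ℝ) : 0 < gE x := Real.exp_pos _

lemma gE_integrable : Integrable gE := integrable_exp_neg_mul_sq (by norm_num)

lemma gE_cont : Continuous gE := by unfold gE; fun_prop

lemma gE_neg (x : ℝ) : gE (-x) = gE x := by simp [gE]

lemma gE_mul_exp (x : ℝ) : Real.exp (1/2 * x^2) * gE x = 1 := by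
  unfold gE; rw [← Real.exp_add]; simp

lemma gE_integral : ∫ x, gE x = Real.sqrt (2 * Real.pi) := by
  unfold gE; rw [integral_gaussian]; congr 1; field_simp

lemma gE_tail_le (w : ℝ) (hw : 0 ≤ w) :
    ∫ x in Ioi w, gE x ≤ Real.sqrt (2 * Real.pi) / 2 * gE w := by
  have h1 : ∫ x in Ioi w, gE x = ∫ x in Ioi (0:ℝ), gE (x + w) := by
    have := (measurePreserving_add_right (volume : Measure ℝ) w).setIntegral_preimage_emb
      (MeasurableEquiv.addRight w).measurableEmbedding gE (Ioi w)
    rw [← this]; simp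
  have h2 : ∫ x in Ioi (0:ℝ), gE x = Real.sqrt (2 * Real.pi) / 2 := by
    unfold gE; rw [integral_gaussian_Ioi]; congr 2; field_simp
  rw [h1, ← h2, ← integral_mul_const]
  apply setIntegral_mono_on
  · exact (gE_integrable.comp_add_right w).integrableOn
  · exact (gE_integrable.mul_const _).integrableOn
  · exact measurableSet_Ioi
  · intro x hx
    unfold gE
    rw [← Real.exp_add]
    apply Real.exp_le_exp.mpr
    nlinarith [mul_nonneg (le_of_lt (mem_Ioi.mp hx)) hw]

lemma gE_mills (w : ℝ) (_hw : 0 ≤ w) : w * ∫ x in Ioi w, gE x ≤ gE w := by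
  have hint : Integrable (fun x : ℝ => x * gE x) := by
    simpa [gE] using integrable_mul_exp_neg_mul_sq (b := 1/2) (by norm_num)
  have hd : ∀ x : ℝ, HasDerivAt (fun x => - gE x) (x * gE x) x := by
    intro x
    have : HasDerivAt (fun x : ℝ => -(1/2) * x ^ 2) (-x) x := by
      have := (hasDerivAt_pow 2 x).const_mul (-(1/2) : ℝ)
      exact this.congr_deriv (by simp)
    have h2 := this.exp.neg
    exact h2.congr_deriv (by simp [gE]; ring)
  have ht : Tendsto (fun x => - gE x) atTop (𝓝 0) := by
    have : Tendsto (fun x : ℝ => -(1/2) * x^2) atTop atBot := by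
      apply Tendsto.const_mul_atTop_of_neg (by norm_num)
      exact tendsto_pow_atTop (by norm_num)
    have := (Real.tendsto_exp_atBot.comp this).neg
    simpa [gE] using this
  have h1 : ∫ x in Ioi w, x * gE x = gE w := by
    rw [integral_Ioi_of_hasDerivAt_of_tendsto (f := fun x => - gE x) (m := 0)
      (hd w).continuousAt.continuousWithinAt (fun x _ => hd x) hint.integrableOn ht]
    simp
  rw [← h1, ← integral_const_mul]
  apply setIntegral_mono_on (gE_integrable.const_mul w).integrableOn hint.integrableOn
    measurableSet_Ioi
  intro x hx
  exact mul_le_mul_of_nonneg_right (le_of_lt hx) (gE_pos x).le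

lemma stein_alg (w E I J N h G c0 : ℝ) (hE : E * G = 1) (hG : 0 < G) (hw : 0 ≤ w)
    (hI : w * I ≤ G) (hI2 : I ≤ c0 * G) (hJ0 : 0 ≤ J) (hJ : J ≤ I) (hN0 : 0 ≤ N) (hN1 : N ≤ 1)
    (h0 : 0 ≤ h) (h1 : h ≤ 1) :
    |E * (J - N * I)| ≤ c0 ∧ |w * (E * (J - N * I)) - h + N| ≤ 1 := by
  have hE0 : 0 < E := by
    by_contra hh; push Not at hh; nlinarith
  have hI0 : 0 ≤ I := hJ0.trans hJ
  have hq : w * (E * I) ≤ 1 := by nlinarith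
  have hq0 : 0 ≤ w * (E * I) := by positivity
  have hj : w * (E * J) ≤ w * (E * I) := by gcongr
  have hj0 : 0 ≤ w * (E * J) := by positivity
  have hEI : E * I ≤ c0 := by nlinarith
  have hEJ : E * J ≤ E * I := by gcongr
  have hEJ0 : 0 ≤ E * J := by positivity
  have hNI : N * (E * I) ≤ E * I := by
    have : 0 ≤ E * I := by positivity
    nlinarith
  have hNI0 : 0 ≤ N * (E * I) := by positivity
  constructor
  · rw [abs_le]; constructor <;> nlinarith
  · have e : w * (E * (J - N * I)) - h + N = w * (E * J) - N * (w * (E * I)) - h + N := by ring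
    rw [e, abs_le]
    constructor <;> nlinarith [mul_nonneg hN0 (sub_nonneg.mpr hq), mul_nonneg hN0 hq0, mul_nonneg (sub_nonneg.mpr hN1) (sub_nonneg.mpr hq)]

lemma sqrt_two_pi_le : Real.sqrt (2 * Real.pi) / 2 ≤ 1.26 := by
  have : Real.sqrt (2 * Real.pi) ≤ 2.52 := by
    rw [Real.sqrt_le_left (by norm_num)]
    nlinarith [Real.pi_lt_d2]
  linarith

/-- Solution of Stein's equation. -/
lemma stein_solution (h : ℝ → ℝ) (hc : Continuous h) (h0 : ∀ x, 0 ≤ h x) (h1 : ∀ x, h x ≤ 1) :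
    ∃ f f' : ℝ → ℝ, (∀ w, HasDerivAt f (f' w) w) ∧
      (∀ w, f' w = w * f w + h w - (∫ x, h x * gE x) / Real.sqrt (2 * Real.pi)) ∧
      (∀ w, |f w| ≤ 1.26) ∧ (∀ w, |f' w| ≤ 1) := by
  set N := (∫ x, h x * gE x) / Real.sqrt (2 * Real.pi) with hN
  have hs : 0 < Real.sqrt (2 * Real.pi) := by positivity
  have hhi : Integrable (fun x => h x * gE x) := by
    refine gE_integrable.bdd_mul (c := 1) hc.aestronglyMeasurable (ae_of_all _ fun x => ?_)
    rw [Real.norm_eq_abs, abs_of_nonneg (h0 x)]; exact h1 x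
  have hN0 : 0 ≤ N := div_nonneg (integral_nonneg fun x => mul_nonneg (h0 x) (gE_pos x).le) hs.le
  have hN1 : N ≤ 1 := by
    rw [hN, div_le_one hs, ← gE_integral]
    exact integral_mono hhi gE_integrable fun x => by nlinarith [gE_pos x, h1 x]
  let k : ℝ → ℝ := fun x => h x * gE x - N * gE x
  have hk : Integrable k := hhi.sub (gE_integrable.const_mul N)
  have hkc : Continuous k := by
    have := gE_cont
    fun_prop
  have hk0 : ∫ x, k x = 0 := by
    show ∫ x, (h x * gE x - N * gE x) = 0
    rw [integral_sub hhi (gE_integrable.const_mul N), integral_const_mul, gE_integral, hN]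
    field_simp; simp
  let F : ℝ → ℝ := fun w => ∫ x in Iic w, k x
  have hF : ∀ w, HasDerivAt F (k w) w := by
    intro w
    have e : F = fun w => F 0 + ∫ x in (0:ℝ)..w, k x := by
      funext w
      rw [← intervalIntegral.integral_Iic_sub_Iic hk.integrableOn hk.integrableOn]
      simp [F]
    rw [e]
    exact (intervalIntegral.integral_hasDerivAt_right (hkc.intervalIntegrable _ _)
      (hkc.stronglyMeasurableAtFilter _ _) hkc.continuousAt).const_add _
  let f : ℝ → ℝ := fun w => Real.exp (1/2 * w^2) * F w
  let f' : ℝ → ℝ := fun w => w * f w + h w - N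
  have hf : ∀ w, HasDerivAt f (f' w) w := by
    intro w
    have a : HasDerivAt (fun x : ℝ => 1/2 * x ^ 2) w w := by
      have := (hasDerivAt_pow 2 w).const_mul (1/2 : ℝ)
      exact this.congr_deriv (by simp)
    have := a.exp.mul (hF w)
    refine this.congr_deriv ?_
    simp only [f', f, k]
    have := gE_mul_exp w
    linear_combination ((h w - N)) * this
  have key : ∀ w, |f w| ≤ 1.26 ∧ |f' w| ≤ 1 := by
    intro w
    rcases le_total 0 w with hw | hw
    · have hJ0 : 0 ≤ ∫ x in Ioi w, h x * gE x :=
        integral_nonneg fun x => mul_nonneg (h0 x) (gE_pos x).le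
      have hJ1 : ∫ x in Ioi w, h x * gE x ≤ ∫ x in Ioi w, gE x :=
        integral_mono hhi.integrableOn gE_integrable.integrableOn
          fun x => by nlinarith [gE_pos x, h1 x]
      have A := stein_alg w (Real.exp (1/2 * w^2)) (∫ x in Ioi w, gE x)
        (∫ x in Ioi w, h x * gE x) N (h w) (gE w) 1.26 (gE_mul_exp w) (gE_pos w) hw (gE_mills w hw)
        ((gE_tail_le w hw).trans (mul_le_mul_of_nonneg_right sqrt_two_pi_le (gE_pos w).le))
        hJ0 hJ1 hN0 hN1 (h0 w) (h1 w)
      have e : F w = - ((∫ x in Ioi w, h x * gE x) - N * ∫ x in Ioi w, gE x) := by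
        have := intervalIntegral.integral_Iic_add_Ioi (b := w) hk.integrableOn hk.integrableOn
        rw [hk0] at this
        have e2 : ∫ x in Ioi w, k x = (∫ x in Ioi w, h x * gE x) - N * ∫ x in Ioi w, gE x := by
          show ∫ x in Ioi w, (h x * gE x - N * gE x) = _
          rw [integral_sub hhi.integrableOn (gE_integrable.const_mul N).integrableOn,
            integral_const_mul]
        rw [← e2]; simp only [F]; linarith
      constructor
      · simp only [f, e]; rw [mul_neg, abs_neg]; exact A.1
      · simp only [f', f, e]
        rw [← abs_neg]
        convert A.2 using 2; ring
    · have hw' : 0 ≤ -w := by linarith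
      have hJ0 : 0 ≤ ∫ x in Iic w, h x * gE x :=
        integral_nonneg fun x => mul_nonneg (h0 x) (gE_pos x).le
      have hJ1 : ∫ x in Iic w, h x * gE x ≤ ∫ x in Iic w, gE x :=
        integral_mono hhi.integrableOn gE_integrable.integrableOn
          fun x => by nlinarith [gE_pos x, h1 x]
      have hI : ∫ x in Iic w, gE x = ∫ x in Ioi (-w), gE x := by
        rw [← integral_comp_neg_Iic]; simp only [gE_neg]
      have m1 := gE_mills (-w) hw'
      have m2 := (gE_tail_le (-w) hw').trans
        (mul_le_mul_of_nonneg_right sqrt_two_pi_le (gE_pos (-w)).le)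
      rw [← hI, gE_neg] at m1 m2
      have A := stein_alg (-w) (Real.exp (1/2 * w^2)) (∫ x in Iic w, gE x)
        (∫ x in Iic w, h x * gE x) N (h w) (gE w) 1.26 (gE_mul_exp w) (gE_pos w) hw' m1 m2
        hJ0 hJ1 hN0 hN1 (h0 w) (h1 w)
      have e : F w = ((∫ x in Iic w, h x * gE x) - N * ∫ x in Iic w, gE x) := by
        show ∫ x in Iic w, (h x * gE x - N * gE x) = _
        rw [integral_sub hhi.integrableOn (gE_integrable.const_mul N).integrableOn,
            integral_const_mul]
      constructor
      · simp only [f, e]; exact A.1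
      · simp only [f', f, e]
        rw [← abs_neg]
        convert A.2 using 2; ring
  exact ⟨f, f', hf, fun w => rfl, fun w => (key w).1, fun w => (key w).2⟩


lemma stdGaussCDF_eq (t : ℝ) :
    stdGaussCDF t = (∫ x in Iic t, gE x) / Real.sqrt (2 * Real.pi) := by
  unfold stdGaussCDF
  rw [gaussianReal_apply_eq_integral 0 (by norm_num) (Iic t), ENNReal.toReal_ofReal
    (integral_nonneg fun x => gaussianPDFReal_nonneg _ _ _), div_eq_inv_mul, ← integral_const_mul]
  congr 1
  funext x
  rw [gaussianPDFReal_def]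
  simp [gE]
  ring_nf
  simp

lemma gE_le_one (x : ℝ) : gE x ≤ 1 := by
  unfold gE; rw [Real.exp_le_one_iff]; nlinarith [sq_nonneg x]

lemma stdGaussCDF_lip (a b : ℝ) (hab : a ≤ b) :
    stdGaussCDF b ≤ stdGaussCDF a + 0.4 * (b - a) := by
  have hs : 0 < Real.sqrt (2 * Real.pi) := by positivity
  have h1 := intervalIntegral.integral_Iic_sub_Iic (a := a) (b := b)
    gE_integrable.integrableOn gE_integrable.integrableOn
  have h2 : ∫ x in a..b, gE x ≤ (b - a) := by
    calc ∫ x in a..b, gE x ≤ ∫ x in a..b, (1:ℝ) :=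
          intervalIntegral.integral_mono_on hab (gE_cont.intervalIntegrable _ _)
            (by simp) (fun x _ => gE_le_one x)
      _ = b - a := by simp
  have h3 : (2.5 : ℝ) ≤ Real.sqrt (2 * Real.pi) := by
    apply Real.le_sqrt_of_sq_le; nlinarith [Real.pi_gt_d2]
  rw [stdGaussCDF_eq, stdGaussCDF_eq, div_add' _ _ _ hs.ne', div_le_div_iff_of_pos_right hs]
  nlinarith [mul_le_mul_of_nonneg_right h3 (sub_nonneg.mpr hab)]

/-- smoothed indicator -/
def hS (z α w : ℝ) : ℝ := max 0 (min 1 (1 + (z - w) / α))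

lemma hS_cont (z α : ℝ) : Continuous (hS z α) := by unfold hS; fun_prop
lemma hS_nonneg (z α w : ℝ) : 0 ≤ hS z α w := le_max_left _ _
lemma hS_le (z α w : ℝ) : hS z α w ≤ 1 := max_le zero_le_one (min_le_left _ _)
lemma hS_one (z α w : ℝ) (hα : 0 < α) (h : w ≤ z) : hS z α w = 1 := by
  unfold hS
  have : 0 ≤ (z - w) / α := div_nonneg (by linarith) hα.le
  rw [min_eq_left (by linarith)]; simp
lemma hS_zero (z α w : ℝ) (hα : 0 < α) (h : z + α ≤ w) : hS z α w = 0 := by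
  unfold hS
  have : (z - w) / α ≤ -1 := by rw [div_le_iff₀ hα]; linarith
  exact max_eq_left ((min_le_right _ _).trans (by linarith))

lemma hS_lip (z α w s : ℝ) (hα : 0 < α) : |hS z α (w + s) - hS z α w| ≤ |s| * (1/α) := by
  have h1 : |max 0 (min 1 (1 + (z - (w+s)) / α)) - max 0 (min 1 (1 + (z - w) / α))| ≤
      |min 1 (1 + (z - (w+s)) / α) - min 1 (1 + (z - w) / α)| := by
    have := abs_max_sub_max_le_abs (min 1 (1 + (z - (w+s)) / α)) (min 1 (1 + (z - w) / α)) 0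
    simpa only [max_comm] using this
  have h2 : |min 1 (1 + (z - (w+s)) / α) - min 1 (1 + (z - w) / α)| ≤
      |(1 + (z - (w+s)) / α) - (1 + (z - w) / α)| := by
    have := abs_min_sub_min_le_max 1 (1 + (z - (w+s)) / α) 1 (1 + (z - w) / α)
    simpa using this
  refine (h1.trans h2).trans ?_
  have : (1 + (z - (w+s)) / α) - (1 + (z - w) / α) = - s * (1/α) := by field_simp; ring
  rw [this, abs_mul, abs_neg, abs_of_pos (by positivity : 0 < 1/α)]

lemma hS_loc (z α w s δ : ℝ) (hα : 0 < α) (hs : |s| ≤ δ) :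
    |hS z α (w + s) - hS z α w| ≤
      |s| * ((1/α) * (Ioc (z - δ) (z + α + δ)).indicator (fun _ => (1:ℝ)) w) := by
  by_cases hw : w ∈ Ioc (z - δ) (z + α + δ)
  · rw [indicator_of_mem hw, mul_one]; exact hS_lip z α w s hα
  · rw [indicator_of_notMem hw]
    have := abs_le.mp hs
    rw [mem_Ioc, not_and_or, not_lt, not_le] at hw
    rcases hw with hw | hw
    · rw [hS_one z α (w+s) hα (by linarith), hS_one z α w hα (by linarith)]; simp
    · rw [hS_zero z α (w+s) hα (by linarith), hS_zero z α w hα (by linarith)]; simp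

lemma stein_rem (f f' h : ℝ → ℝ) (N : ℝ) (hf : ∀ w, HasDerivAt f (f' w) w)
    (he : ∀ w, f' w = w * f w + h w - N) (hf0 : ∀ w, |f w| ≤ 1.26) (hf1 : ∀ w, |f' w| ≤ 1)
    (w t e : ℝ) (hh : ∀ s, |s| ≤ |t| → |h (w + s) - h w| ≤ |s| * e) :
    |f (w + t) - f w - t * f' w| ≤ t^2 / 2 * (1.26 + |w| + e) := by
  have hlip : ∀ x y, |f y - f x| ≤ |y - x| := by
    intro x y
    have := convex_univ.norm_image_sub_le_of_norm_hasDerivWithin_le (f := f) (f' := f') (C := 1)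
      (s := univ) (x := x) (y := y) (fun x _ => (hf x).hasDerivWithinAt) (fun x _ => hf1 x)
      (mem_univ _) (mem_univ _)
    simpa using this
  have hb : ∀ s, |s| ≤ |t| → |f' (w + s) - f' w| ≤ |s| * (1.26 + |w| + e) := by
    intro s hs
    have e1 : f' (w + s) - f' w = s * f (w + s) + w * (f (w + s) - f w) + (h (w + s) - h w) := by
      rw [he, he]; ring
    rw [e1]
    have a1 : |s * f (w + s)| ≤ |s| * 1.26 := by
      rw [abs_mul]; exact mul_le_mul_of_nonneg_left (hf0 _) (abs_nonneg _)
    have a2 : |w * (f (w + s) - f w)| ≤ |s| * |w| := by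
      rw [abs_mul, mul_comm |s|]
      refine mul_le_mul_of_nonneg_left ((hlip _ _).trans ?_) (abs_nonneg _)
      simp
    calc _ ≤ |s * f (w + s)| + |w * (f (w + s) - f w)| + |h (w+s) - h w| := abs_add_three _ _ _
      _ ≤ _ := by have := hh s hs; linarith
  let ψ : ℝ → ℝ := fun s => f (w + s * t) - f w - s * (t * f' w)
  have hψ : ∀ s, HasDerivAt ψ (t * (f' (w + s * t) - f' w)) s := by
    intro s
    have h1 : HasDerivAt (fun s : ℝ => w + s * t) t s := by
      simpa using ((hasDerivAt_id s).mul_const t).const_add w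
    have h2 := ((hf (w + s * t)).comp s h1).sub_const (f w)
    have h3 : HasDerivAt (fun s : ℝ => s * (t * f' w)) (t * f' w) s := by
      simpa using (hasDerivAt_id s).mul_const (t * f' w)
    exact (h2.sub h3).congr_deriv (by ring)
  have key := image_norm_le_of_norm_deriv_right_le_deriv_boundary (f := ψ)
    (f' := fun s => t * (f' (w + s * t) - f' w)) (a := 0) (b := 1)
    (B := fun s => s^2 * (t^2/2 * (1.26 + |w| + e))) (B' := fun s => 2 * s * (t^2/2 * (1.26 + |w| + e)))
    (fun s _ => (hψ s).continuousAt.continuousWithinAt)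
    (fun s _ => (hψ s).hasDerivWithinAt) (by simp [ψ])
    (fun s => by simpa using (hasDerivAt_pow 2 s).mul_const (t^2/2 * (1.26 + |w| + e)))
    (fun s hs => by
      rw [Real.norm_eq_abs, abs_mul]
      have hst : |s * t| = s * |t| := by rw [abs_mul, abs_of_nonneg hs.1]
      have := hb (s * t) (by rw [hst]; nlinarith [hs.2, abs_nonneg t])
      rw [hst] at this
      calc |t| * |f' (w + s * t) - f' w| ≤ |t| * (s * |t| * (1.26 + |w| + e)) :=
            mul_le_mul_of_nonneg_left this (abs_nonneg _)
        _ = _ := by rw [← sq_abs t]; ring)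
  have := key (x := 1) (by simp)
  simpa [ψ] using this


lemma hS_gauss_ge (z α : ℝ) (hα : 0 < α) :
    stdGaussCDF z ≤ (∫ x, hS z α x * gE x) / Real.sqrt (2 * Real.pi) := by
  have hhi : Integrable (fun x => hS z α x * gE x) := by
    refine gE_integrable.bdd_mul (c := 1) (hS_cont z α).aestronglyMeasurable
      (ae_of_all _ fun x => ?_)
    rw [Real.norm_eq_abs, abs_of_nonneg (hS_nonneg _ _ x)]; exact hS_le _ _ x
  rw [stdGaussCDF_eq, ← integral_indicator measurableSet_Iic]
  gcongr
  · exact gE_integrable.indicator measurableSet_Iic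
  · intro x
    by_cases hx : x ∈ Iic z
    · simp only [indicator_of_mem hx, hS_one z α x hα hx, one_mul]; rfl
    · simp only [indicator_of_notMem hx]
      exact mul_nonneg (hS_nonneg _ _ _) (gE_pos x).le

lemma hS_gauss_le (z α : ℝ) (hα : 0 < α) :
    (∫ x, hS z α x * gE x) / Real.sqrt (2 * Real.pi) ≤ stdGaussCDF (z + α) := by
  have hhi : Integrable (fun x => hS z α x * gE x) := by
    refine gE_integrable.bdd_mul (c := 1) (hS_cont z α).aestronglyMeasurable
      (ae_of_all _ fun x => ?_)
    rw [Real.norm_eq_abs, abs_of_nonneg (hS_nonneg _ _ x)]; exact hS_le _ _ x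
  rw [stdGaussCDF_eq, ← integral_indicator measurableSet_Iic]
  gcongr
  · exact gE_integrable.indicator measurableSet_Iic
  · intro x
    by_cases hx : x ∈ Iic (z + α)
    · simp only [indicator_of_mem hx]
      have := hS_le z α x
      have := gE_pos x
      show hS z α x * gE x ≤ gE x
      nlinarith
    · simp only [indicator_of_notMem hx]
      rw [mem_Iic, not_le] at hx
      simp only [hS_zero z α x hα hx.le, zero_mul]; rfl

lemma bdd_integrable {Ω : Type*} [MeasurableSpace Ω] (Q : Measure Ω) [IsFiniteMeasure Q]
    (F : Ω → ℝ) (hF : Measurable F) (K : ℝ) (hK : ∀ ω, |F ω| ≤ K) : Integrable F Q :=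
  Integrable.of_bound hF.aestronglyMeasurable K (ae_of_all _ hK)

section SteinMain

variable {Ω : Type*} [MeasurableSpace Ω] (Q : Measure Ω) [IsProbabilityMeasure Q]
  {ι : Type*} [Fintype ι] (X : Ω → ℝ) (w X' : ι → Ω → ℝ) (C B m0 μ σ Δ : ℝ)

structure SteinHyp : Prop where
  hX : Measurable X
  hXC : ∀ ω, |X ω| ≤ C
  hw : ∀ a, Measurable (w a)
  hwC : ∀ a ω, |w a ω| ≤ C
  hX' : ∀ a, Measurable (X' a)
  hB : ∀ a ω, |X' a ω - X ω| ≤ B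
  hB0 : 0 < B
  hσ : 0 < σ
  hμ : 0 ≤ μ
  hΔ : 0 ≤ Δ
  hm : ∫ ω, X ω ∂Q = m0
  hvar : ∫ ω, (X ω - m0) ^ 2 ∂Q = σ ^ 2
  H1 : ∀ g : ℝ → ℝ, Continuous g →
    ∫ ω, (X ω - m0) * g (X ω) ∂Q = ∫ ω, ∑ a, w a ω * (g (X' a ω) - g (X ω)) ∂Q
  H2 : ∀ u : ℝ → ℝ, Measurable u → (∀ x, 0 ≤ u x) → (∃ K, ∀ ω, u (X ω) ≤ K) →
    ∫ ω, (∑ a, |w a ω|) * u (X ω) ∂Q ≤ μ * ∫ ω, u (X ω) ∂Q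
  H3 : ∀ u : ℝ → ℝ, Measurable u → (∀ x, |u x| ≤ 1) →
    |σ ^ 2 * ∫ ω, u (X ω) ∂Q - ∫ ω, ∑ a, w a ω * (X' a ω - X ω) * u (X ω) ∂Q| ≤ μ * Δ

variable {Q X w X' C B m0 μ σ Δ}

lemma SteinHyp.sum_int (S : SteinHyp Q X w X' C B m0 μ σ Δ) (G : ι → Ω → ℝ)
    (hG : ∀ a, Measurable (G a)) (K : ℝ) (hK : ∀ a ω, |G a ω| ≤ K) :
    Integrable (fun ω => ∑ a, w a ω * G a ω) Q := by
  refine integrable_finsetSum _ fun a _ => ?_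
  refine bdd_integrable Q _ ((S.hw a).mul (hG a)) (C * K) fun ω => ?_
  rw [abs_mul]
  exact mul_le_mul (S.hwC a ω) (hK a ω) (abs_nonneg _) ((abs_nonneg _).trans (S.hwC a ω))

lemma SteinHyp.sigma_le (S : SteinHyp Q X w X' C B m0 μ σ Δ) : σ ^ 2 ≤ μ * B := by
  have h1 := S.H1 (fun x => x) continuous_id
  have h2 := S.H2 (fun _ => B) measurable_const (fun _ => S.hB0.le) ⟨B, fun _ => le_rfl⟩
  have h3 : ∫ ω, (X ω - m0) * X ω ∂Q = σ ^ 2 := by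
    have iX := bdd_integrable Q X S.hX C S.hXC
    have i1 : Integrable (fun ω => (X ω - m0) * X ω) Q :=
      iX.bdd_mul (c := C + |m0|) (S.hX.sub_const m0).aestronglyMeasurable
        (ae_of_all _ fun ω => (abs_sub _ _).trans (by linarith [S.hXC ω]))
    have e : ∀ ω, (X ω - m0)^2 = (X ω - m0) * X ω - m0 * (X ω - m0) := fun ω => by ring
    rw [← S.hvar]
    simp_rw [e]
    have i2 : Integrable (fun ω => m0 * (X ω - m0)) Q :=
      (iX.sub (integrable_const m0)).const_mul m0
    rw [integral_sub i1 i2, integral_const_mul,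
      integral_sub iX (integrable_const _), S.hm]
    simp
  rw [← h3, h1]
  have h4 : ∫ ω, (fun _ : ℝ => B) (X ω) ∂Q = B := by simp
  rw [h4] at h2
  refine le_trans (integral_mono ?_ ?_ ?_) h2
  · refine S.sum_int _ (fun a => (S.hX' a).sub S.hX) B S.hB
  · refine Integrable.mul_const (integrable_finsetSum _ fun a _ => ?_) _
    exact (bdd_integrable Q _ (S.hw a) C (S.hwC a)).abs
  · intro ω
    simp only
    rw [Finset.sum_mul]
    refine Finset.sum_le_sum fun a _ => (le_abs_self _).trans ?_
    rw [abs_mul]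
    exact mul_le_mul_of_nonneg_left (S.hB a ω) (abs_nonneg _)

lemma SteinHyp.step (S : SteinHyp Q X w X' C B m0 μ σ Δ) (D : ℝ)
    (hD : ∀ t, |Q.real {ω | (X ω - m0) / σ ≤ t} - stdGaussCDF t| ≤ D) (z α : ℝ) (hα : 0 < α) :
    |∫ ω, hS z α ((X ω - m0) / σ) ∂Q - (∫ x, hS z α x * gE x) / Real.sqrt (2 * Real.pi)| ≤
      μ * Δ / σ ^ 2 + (μ / σ * (B / σ) ^ 2) / 2 *
        (2.26 + (1 / α) * (0.4 * (α + 2 * (B / σ)) + 2 * D)) := by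
  obtain ⟨f, f', hf, he, hf0, hf1⟩ := stein_solution (hS z α) (hS_cont z α) (hS_nonneg z α)
    (hS_le z α)
  set N := (∫ x, hS z α x * gE x) / Real.sqrt (2 * Real.pi) with hN
  set δ := B / σ with hδ
  have hσ := S.hσ
  have hδ0 : 0 < δ := div_pos S.hB0 hσ
  have hfc : Continuous f := continuous_iff_continuousAt.mpr fun x => (hf x).continuousAt
  have hf'c : Continuous f' := by
    have : f' = fun w => w * f w + hS z α w - N := funext he
    rw [this]
    have := hS_cont z α
    fun_prop
  let W : Ω → ℝ := fun ω => (X ω - m0) / σ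
  have hWm : Measurable W := (S.hX.sub_const _).div_const _
  have iX := bdd_integrable Q X S.hX C S.hXC
  -- the function e
  let ee : ℝ → ℝ := fun v => (1/α) * (Ioc (z - δ) (z + α + δ)).indicator (fun _ => (1:ℝ)) v
  have hee : Measurable ee := (measurable_const.indicator measurableSet_Ioc).const_mul _
  have hee0 : ∀ v, 0 ≤ ee v := fun v => mul_nonneg (by positivity)
    (indicator_nonneg (fun _ _ => zero_le_one) _)
  have hee1 : ∀ v, ee v ≤ 1/α := fun v => by
    have : (Ioc (z - δ) (z + α + δ)).indicator (fun _ => (1:ℝ)) v ≤ 1 :=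
      indicator_apply_le' (fun _ => le_rfl) (fun _ => zero_le_one)
    have h2 : 0 < 1/α := by positivity
    show (1/α) * _ ≤ _
    nlinarith
  -- Stein identity
  have h1 := S.H1 (fun x => f ((x - m0) / σ)) (by fun_prop)
  have h3 := S.H3 (fun x => f' ((x - m0) / σ)) (by fun_prop) (fun x => hf1 _)
  let u : ℝ → ℝ := fun x => δ^2/2 * (1.26 + |(x - m0)/σ| + ee ((x - m0)/σ))
  have hum : Measurable u := by
    have : Measurable fun x : ℝ => ee ((x - m0)/σ) := hee.comp (by fun_prop)
    have h2 : Measurable fun x : ℝ => |(x - m0)/σ| := by fun_prop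
    exact ((h2.const_add 1.26).add this).const_mul _
  have hu0 : ∀ x, 0 ≤ u x := fun x => by have := hee0 ((x - m0)/σ); positivity
  have hWb : ∀ ω, |W ω| ≤ (C + |m0|) / σ := fun ω => by
    show |(X ω - m0) / σ| ≤ _
    rw [abs_div, abs_of_pos hσ]
    gcongr
    exact (abs_sub _ _).trans (by linarith [S.hXC ω])
  have huK : ∀ ω, u (X ω) ≤ δ^2/2 * (1.26 + (C + |m0|)/σ + 1/α) := fun ω => by
    have := hWb ω
    have := hee1 (W ω)
    show δ^2/2 * (1.26 + |W ω| + ee (W ω)) ≤ _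
    gcongr
  have h2 := S.H2 u hum hu0 ⟨_, huK⟩
  -- remainder
  let r : ι → Ω → ℝ := fun a ω => f ((X' a ω - m0)/σ) - f (W ω) - ((X' a ω - X ω)/σ) * f' (W ω)
  have hr : ∀ a ω, |r a ω| ≤ u (X ω) := by
    intro a ω
    have e1 : (X' a ω - m0)/σ = W ω + (X' a ω - X ω)/σ := by
      show _ = (X ω - m0)/σ + _
      ring
    have hd : |(X' a ω - X ω)/σ| ≤ δ := by
      rw [abs_div, abs_of_pos hσ]; exact div_le_div_of_nonneg_right (S.hB a ω) hσ.le
    have := stein_rem f f' (hS z α) N hf he hf0 hf1 (W ω) ((X' a ω - X ω)/σ) (ee (W ω))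
      (fun s hs => hS_loc z α (W ω) s δ hα (hs.trans hd))
    simp only [r]
    rw [e1]
    refine this.trans ?_
    show _ ≤ δ^2/2 * (1.26 + |W ω| + ee (W ω))
    have h5 : ((X' a ω - X ω)/σ)^2 ≤ δ^2 := by
      rw [← sq_abs]; gcongr
    have := hee0 (W ω)
    gcongr
  have hrm : ∀ a, Measurable (r a) := by
    intro a
    have hh := S.hX' a
    have hh2 := S.hX
    have m1 : Measurable fun ω => f ((X' a ω - m0)/σ) := hfc.measurable.comp (by fun_prop)
    have m2 : Measurable fun ω => f (W ω) := hfc.measurable.comp hWm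
    have m3 : Measurable fun ω => f' (W ω) := hf'c.measurable.comp hWm
    exact (m1.sub m2).sub (((hh.sub hh2).div_const σ).mul m3)
  set R := ∫ ω, ∑ a, w a ω * r a ω ∂Q with hR
  have hRle : |R| ≤ μ * ∫ ω, u (X ω) ∂Q := by
    refine le_trans ?_ h2
    rw [hR, ← Real.norm_eq_abs]
    refine norm_integral_le_of_norm_le ?_ (ae_of_all _ fun ω => ?_)
    · refine Integrable.mul_bdd (c := δ^2/2 * (1.26 + (C + |m0|)/σ + 1/α))
        (integrable_finsetSum _ fun a _ => ?_) ?_ ?_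
      · exact (bdd_integrable Q _ (S.hw a) C (S.hwC a)).abs
      · exact (hum.comp S.hX).aestronglyMeasurable
      · refine ae_of_all _ fun ω => ?_
        rw [Real.norm_eq_abs, abs_of_nonneg (hu0 _)]; exact huK ω
    · rw [Real.norm_eq_abs, Finset.sum_mul]
      refine (Finset.abs_sum_le_sum_abs _ _).trans (Finset.sum_le_sum fun a _ => ?_)
      rw [abs_mul]
      exact mul_le_mul_of_nonneg_left (hr a ω) (abs_nonneg _)
  -- split the identity
  have hsplit : ∫ ω, ∑ a, w a ω * (f ((X' a ω - m0)/σ) - f ((X ω - m0)/σ)) ∂Q =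
      R + (1/σ) * ∫ ω, ∑ a, w a ω * (X' a ω - X ω) * f' ((X ω - m0)/σ) ∂Q := by
    rw [hR, ← integral_const_mul, ← integral_add]
    · congr 1
      funext ω
      rw [Finset.mul_sum, ← Finset.sum_add_distrib]
      refine Finset.sum_congr rfl fun a _ => ?_
      simp only [r, W]
      ring
    · exact S.sum_int _ hrm _ (fun a ω => (hr a ω).trans (huK ω))
    · refine Integrable.const_mul ?_ _
      have := S.sum_int (fun a ω => (X' a ω - X ω) * f' (W ω))
        (fun a => ((S.hX' a).sub S.hX).mul (hf'c.measurable.comp hWm)) (B * 1) (fun a ω => by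
          rw [abs_mul]; exact mul_le_mul (S.hB a ω) (hf1 _) (abs_nonneg _) S.hB0.le)
      simpa only [mul_assoc] using this
  -- Stein equation integrated
  have iWf : Integrable (fun ω => W ω * f (W ω)) Q := by
    refine bdd_integrable Q _ (hWm.mul (hfc.measurable.comp hWm)) ((C + |m0|)/σ * 1.26) fun ω => ?_
    rw [abs_mul]
    exact mul_le_mul (hWb ω) (hf0 _) (abs_nonneg _) ((abs_nonneg _).trans (hWb ω))
  have if' : Integrable (fun ω => f' (W ω)) Q :=
    bdd_integrable Q _ (hf'c.measurable.comp hWm) 1 fun ω => hf1 _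
  have hmain : ∫ ω, hS z α (W ω) ∂Q - N = ∫ ω, f' (W ω) ∂Q - ∫ ω, W ω * f (W ω) ∂Q := by
    rw [← integral_sub if' iWf]
    have : ∀ ω, f' (W ω) - W ω * f (W ω) = hS z α (W ω) - N := fun ω => by rw [he]; ring
    simp_rw [this]
    rw [integral_sub _ (integrable_const _)]
    · simp
    · exact bdd_integrable Q _ ((hS_cont z α).measurable.comp hWm) 1 fun ω => by
        rw [abs_of_nonneg (hS_nonneg _ _ _)]; exact hS_le _ _ _
  have hWf : ∫ ω, W ω * f (W ω) ∂Q = (1/σ) * ∫ ω, (X ω - m0) * f ((X ω - m0)/σ) ∂Q := by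
    rw [← integral_const_mul]; congr 1; funext ω; simp only [W]; ring
  rw [h1, hsplit] at hWf
  -- E|W| ≤ 1
  have hEW : ∫ ω, |W ω| ∂Q ≤ 1 := by
    have i2 : Integrable (fun ω => (X ω - m0)^2) Q := by
      refine bdd_integrable Q _ (by have := S.hX; fun_prop) ((C + |m0|)^2) fun ω => ?_
      rw [abs_pow]; gcongr; exact (abs_sub _ _).trans (by linarith [S.hXC ω])
    have : ∫ ω, |W ω| ∂Q ≤ ∫ ω, (1/2 + 1/(2*σ^2) * (X ω - m0)^2) ∂Q := by
      refine integral_mono (bdd_integrable Q _ hWm _ hWb).abs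
        ((integrable_const _).add (i2.const_mul _)) fun ω => ?_
      have e : 1/(2*σ^2) * (X ω - m0)^2 = |W ω|^2/2 := by
        rw [sq_abs]; simp only [W]; field_simp
      simp only [e]
      nlinarith [sq_nonneg (|W ω| - 1)]
    refine this.trans ?_
    rw [integral_add (integrable_const _) (i2.const_mul _), integral_const_mul, S.hvar]
    simp only [integral_const, probReal_univ, smul_eq_mul]
    have : 1/(2*σ^2) * σ^2 = 1/2 := by field_simp
    rw [this]; norm_num
  have hEe : ∫ ω, ee (W ω) ∂Q ≤ (1/α) * (0.4 * (α + 2*δ) + 2 * D) := by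
    show ∫ ω, (1/α) * (Ioc (z - δ) (z + α + δ)).indicator (fun _ => (1:ℝ)) (W ω) ∂Q ≤ _
    rw [integral_const_mul]
    gcongr
    have e1 : (fun ω => (Ioc (z - δ) (z + α + δ)).indicator (fun _ => (1:ℝ)) (W ω)) =
        (W ⁻¹' (Ioc (z - δ) (z + α + δ))).indicator (fun _ => (1:ℝ)) := by
      funext ω; rfl
    rw [e1, integral_indicator (hWm measurableSet_Ioc)]
    simp only [integral_const, MeasurableSet.univ, measureReal_restrict_apply, univ_inter,
      smul_eq_mul, mul_one]
    have e2 : W ⁻¹' (Ioc (z - δ) (z + α + δ)) = {ω | W ω ≤ z + α + δ} \ {ω | W ω ≤ z - δ} := by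
      ext ω; simp [and_comm]
    have hsub : {ω | W ω ≤ z - δ} ⊆ {ω | W ω ≤ z + α + δ} :=
      by intro ω h; simp only [mem_setOf_eq] at h ⊢; linarith
    rw [e2, measureReal_sdiff hsub (hWm measurableSet_Iic)]
    have d1 := abs_le.mp (hD (z + α + δ))
    have d2 := abs_le.mp (hD (z - δ))
    have d3 := stdGaussCDF_lip (z - δ) (z + α + δ) (by linarith)
    have : (z + α + δ) - (z - δ) = α + 2*δ := by ring
    rw [this] at d3
    simp only [W]
    linarith [d1.2, d2.1]
  have hEu : ∫ ω, u (X ω) ∂Q ≤ δ^2/2 * (2.26 + (1/α) * (0.4 * (α + 2*δ) + 2 * D)) := by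
    show ∫ ω, δ^2/2 * (1.26 + |W ω| + ee (W ω)) ∂Q ≤ _
    have iW := (bdd_integrable Q _ hWm _ hWb).abs
    have iee : Integrable (fun ω => ee (W ω)) Q :=
      bdd_integrable Q _ (hee.comp hWm) (1/α) fun ω => by
        rw [abs_of_nonneg (hee0 _)]; exact hee1 _
    have iW2 : Integrable (fun ω => 1.26 + |W ω|) Q := (integrable_const _).add iW
    rw [integral_const_mul, integral_add iW2 iee,
      integral_add (integrable_const _) iW]
    simp only [integral_const, probReal_univ, smul_eq_mul, one_mul]
    gcongr
    linarith
  -- conclude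
  show |∫ ω, hS z α (W ω) ∂Q - N| ≤ _
  rw [hmain, hWf]
  set I1 := ∫ ω, ∑ a, w a ω * (X' a ω - X ω) * f' ((X ω - m0)/σ) ∂Q
  have e3 : ∫ ω, f' (W ω) ∂Q - 1/σ * (R + 1/σ * I1) =
      (σ^2 * ∫ ω, f' (W ω) ∂Q - I1) / σ^2 - R/σ := by
    field_simp
    ring
  rw [e3]
  refine (abs_sub _ _).trans ?_
  rw [abs_div, abs_div, abs_of_pos hσ, abs_of_pos (by positivity : 0 < σ^2)]
  have h6 : |R| ≤ μ * (δ^2/2 * (2.26 + (1/α) * (0.4 * (α + 2*δ) + 2 * D))) :=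
    hRle.trans (mul_le_mul_of_nonneg_left hEu S.hμ)
  refine add_le_add (div_le_div_of_nonneg_right h3 (by positivity)) ?_
  calc |R|/σ ≤ μ * (δ^2/2 * (2.26 + (1/α) * (0.4 * (α + 2*δ) + 2 * D)))/σ := by gcongr
    _ = _ := by ring

set_option maxHeartbeats 1000000 in
lemma SteinHyp.main (S : SteinHyp Q X w X' C B m0 μ σ Δ) (t : ℝ) :
    |Q.real {ω | (X ω - m0) / σ ≤ t} - stdGaussCDF t| ≤
      μ / (5 * σ^2) * (Real.sqrt (11 * B^2 / σ + 5 * Δ) + 2 * B / Real.sqrt σ) ^ 2 := by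
  have hσ := S.hσ
  have hB0 := S.hB0
  have hΔ := S.hΔ
  let Fd : ℝ → ℝ := fun t => |Q.real {ω | (X ω - m0) / σ ≤ t} - stdGaussCDF t|
  have hbd : ∀ t, Fd t ≤ 1 := by
    intro t
    have a1 : Q.real {ω | (X ω - m0) / σ ≤ t} ≤ 1 := measureReal_le_one
    have a2 : stdGaussCDF t ≤ 1 := by
      show (gaussianReal 0 1).real (Iic t) ≤ 1
      exact measureReal_le_one
    have a3 : 0 ≤ Q.real {ω | (X ω - m0) / σ ≤ t} := measureReal_nonneg
    have a4 : 0 ≤ stdGaussCDF t := ENNReal.toReal_nonneg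
    show |_| ≤ _
    rw [abs_le]; constructor <;> linarith
  have hBdd : BddAbove (range Fd) := ⟨1, by rintro _ ⟨t, rfl⟩; exact hbd t⟩
  set D := ⨆ t, Fd t with hDdef
  have hD : ∀ t, Fd t ≤ D := fun t => le_ciSup hBdd t
  have hD0 : 0 ≤ D := (abs_nonneg _).trans (hD 0)
  refine (hD t).trans ?_
  have hμ : 0 < μ := by
    have := S.sigma_le
    by_contra hh
    have : μ = 0 := le_antisymm (not_lt.mp hh) S.hμ
    nlinarith [sq_pos_of_pos hσ]
  set δ := B / σ with hδ
  have hδ0 : 0 < δ := by positivity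
  set A := μ / σ * δ^2 with hA
  have hA0 : 0 < A := by positivity
  have hAδ : δ ≤ A := by
    have := S.sigma_le
    have e : A = (μ * B / σ^2) * δ := by rw [hA, hδ]; field_simp
    rw [e]
    have : 1 ≤ μ * B / σ^2 := by rw [le_div_iff₀ (by positivity)]; linarith
    nlinarith
  set τ := μ * Δ / σ^2 with hτ
  have hτ0 : 0 ≤ τ := by positivity
  let W : Ω → ℝ := fun ω => (X ω - m0) / σ
  have hWm : Measurable W := (S.hX.sub_const _).div_const _
  have ih : ∀ z α, Integrable (fun ω => hS z α (W ω)) Q := fun z α =>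
    bdd_integrable Q _ ((hS_cont z α).measurable.comp hWm) 1 fun ω => by
        rw [abs_of_nonneg (hS_nonneg _ _ _)]; exact hS_le _ _ _
  have hms : ∀ z, MeasurableSet {ω | W ω ≤ z} := fun z => hWm measurableSet_Iic
  have hPle : ∀ z α, 0 < α → Q.real {ω | W ω ≤ z} ≤ ∫ ω, hS z α (W ω) ∂Q := by
    intro z α hα
    have : Q.real {ω | W ω ≤ z} = ∫ ω, {ω | W ω ≤ z}.indicator (fun _ => (1:ℝ)) ω ∂Q := by
      rw [integral_indicator (hms _)]; simp
    rw [this]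
    refine integral_mono ((integrable_const _).indicator (hWm measurableSet_Iic)) (ih z α) fun ω => ?_
    by_cases hω : W ω ≤ z
    · rw [indicator_of_mem (by exact hω)]; simp only [hS_one z α (W ω) hα hω]; rfl
    · rw [indicator_of_notMem (by exact hω)]; exact hS_nonneg _ _ _
  have hPge : ∀ z α, 0 < α → ∫ ω, hS z α (W ω) ∂Q ≤ Q.real {ω | W ω ≤ z + α} := by
    intro z α hα
    have : Q.real {ω | W ω ≤ z + α} = ∫ ω, {ω | W ω ≤ z + α}.indicator (fun _ => (1:ℝ)) ω ∂Q := by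
      rw [integral_indicator (hms _)]; simp
    rw [this]
    refine integral_mono (ih z α) ((integrable_const _).indicator (hWm measurableSet_Iic)) fun ω => ?_
    by_cases hω : W ω ≤ z + α
    · rw [indicator_of_mem (by exact hω)]; exact hS_le _ _ _
    · rw [indicator_of_notMem (by exact hω)]
      simp only [hS_zero z α (W ω) hα (not_le.mp hω).le]; rfl
  have hrec : ∀ α, 0 < α → D ≤ 0.4 * α + (τ + A / 2 *
        (2.26 + (1 / α) * (0.4 * (α + 2 * δ) + 2 * D))) := by
    intro α hα
    refine ciSup_le fun z => ?_
    have s1 := abs_le.mp (S.step D hD z α hα)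
    have s2 := abs_le.mp (S.step D hD (z - α) α hα)
    have g1 := hS_gauss_le z α hα
    have g2 := hS_gauss_ge (z - α) α hα
    have l1 := stdGaussCDF_lip z (z + α) (by linarith)
    have l2 := stdGaussCDF_lip (z - α) z (by linarith)
    have p1 := hPle z α hα
    have p2 := hPge (z - α) α hα
    rw [sub_add_cancel] at p2
    show |_| ≤ _
    rw [abs_le]
    simp only [W] at p1 p2
    constructor
    · linarith [s2.1]
    · linarith [s1.2]
  -- optimisation
  set s := Real.sqrt (2.2 * A + τ) with hs
  set r := Real.sqrt (0.8 * A) with hr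
  have hs2 : s^2 = 2.2 * A + τ := Real.sq_sqrt (by positivity)
  have hr2 : r^2 = 0.8 * A := Real.sq_sqrt (by positivity)
  have hs0 : 0 < s := Real.sqrt_pos.mpr (by positivity)
  have hr0 : 0 < r := Real.sqrt_pos.mpr (by positivity)
  have hfin : D ≤ (s + r)^2 := by
    set β := s * r / 0.8 with hβ
    have hβ0 : 0 < β := by positivity
    have hα : 0 < A + β := by positivity
    have h1 := hrec (A + β) hα
    set α := A + β with hαd
    have hAα : A ≤ α := by linarith
    have e1 : A / 2 * (2.26 + (1 / α) * (0.4 * (α + 2 * δ) + 2 * D)) =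
        1.33 * A + 0.4 * A * (δ / α) + (A/α) * D := by field_simp; ring
    have h2 : δ / α ≤ 1 := by rw [div_le_one hα]; linarith
    rw [e1] at h1
    have h3 : D ≤ 0.8 * α + τ + 1.4 * A + (A/α) * D := by nlinarith
    have h4 : D * β ≤ (0.8 * α + τ + 1.4 * A) * α := by
      have : D * α ≤ (0.8 * α + τ + 1.4 * A + (A/α) * D) * α :=
        mul_le_mul_of_nonneg_right h3 hα.le
      have e : (0.8 * α + τ + 1.4 * A + (A/α) * D) * α = (0.8 * α + τ + 1.4 * A) * α + A * D := by
        field_simp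
      rw [e] at this
      have e2 : D * α = D * A + D * β := by rw [hαd]; ring
      linarith
    have e5 : (0.8 * α + τ + 1.4 * A) = s * (s + r) := by
      have : 0.8 * β = s * r := by rw [hβ]; ring
      rw [hαd]; nlinarith
    have e6 : α = r * (s + r) / 0.8 := by
      rw [hαd, hβ]
      have : A = r^2/0.8 := by rw [hr2]; ring
      rw [this]; ring
    rw [e5, e6] at h4
    have e7 : s * (s + r) * (r * (s + r) / 0.8) = (s + r)^2 * β := by rw [hβ]; ring
    rw [e7] at h4
    exact le_of_mul_le_mul_right h4 hβ0
  refine hfin.trans (le_of_eq ?_)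
  set k := Real.sqrt (μ / (5 * σ^2)) with hk
  have hk2 : μ / (5 * σ^2) = k^2 := (Real.sq_sqrt (by positivity)).symm
  rw [hk2, ← mul_pow, mul_add]
  congr 2
  · rw [hk, ← Real.sqrt_mul (by positivity), hs]
    congr 1
    rw [hA, hδ, hτ]; field_simp; ring
  · have : 2 * B / Real.sqrt σ = Real.sqrt (4 * B^2 / σ) := by
      rw [Real.sqrt_div (by positivity), Real.sqrt_mul (by norm_num), Real.sqrt_sq hB0.le]
      congr 2
      rw [show (4:ℝ) = 2^2 by norm_num, Real.sqrt_sq (by norm_num)]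
    rw [this, hk, ← Real.sqrt_mul (by positivity), hr]
    congr 1
    rw [hA, hδ]; field_simp; ring

end SteinMain


/-- exchange weights -/
def wt (p : ℝ) (m k : ℕ) : ℝ := ∫ u in (0:ℝ)..1, (u * (1 - p)) ^ k * (1 - p * u) ^ (m - 1 - k)

lemma wt_ii (p : ℝ) (a b : ℕ) :
    IntervalIntegrable (fun u : ℝ => (u * (1 - p)) ^ a * (1 - p * u) ^ b) volume 0 1 :=
  Continuous.intervalIntegrable (by fun_prop) _ _

lemma wt_id (p : ℝ) (m k : ℕ) (hk : k ≤ m) :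
    k * (1 - p) * wt p m (k - 1) - ((m:ℝ) - k) * p * wt p m k =
      (if k = 0 then 0 else 1) - (1 - (1 - p) ^ m) := by
  have hd : ∀ u : ℝ, HasDerivAt (fun u : ℝ => (u * (1 - p)) ^ k * (1 - p * u) ^ (m - k))
      (k * (1 - p) * ((u * (1 - p)) ^ (k - 1) * (1 - p * u) ^ (m - 1 - (k - 1))) -
        ((m:ℝ) - k) * p * ((u * (1 - p)) ^ k * (1 - p * u) ^ (m - 1 - k))) u := by
    intro u
    have h1 : HasDerivAt (fun u : ℝ => u * (1 - p)) (1 - p) u := by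
      simpa using (hasDerivAt_id u).mul_const (1 - p)
    have h2 : HasDerivAt (fun u : ℝ => 1 - p * u) (-p) u := by
      simpa using ((hasDerivAt_id u).const_mul p).const_sub 1
    have h3 := (h1.pow k).mul (h2.pow (m - k))
    refine h3.congr_deriv ?_
    simp only [Pi.pow_apply]
    rw [Nat.cast_sub hk, show m - k - 1 = m - 1 - k by omega]
    rcases Nat.eq_zero_or_pos k with h0 | h0
    · subst h0; simp; ring
    · rw [show m - 1 - (k - 1) = m - k by omega]; ring
  have h := intervalIntegral.integral_eq_sub_of_hasDerivAt (a := 0) (b := 1)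
    (fun u _ => hd u) (Continuous.intervalIntegrable (by fun_prop) _ _)
  rw [intervalIntegral.integral_sub ((wt_ii _ _ _).const_mul _) ((wt_ii _ _ _).const_mul _),
    intervalIntegral.integral_const_mul, intervalIntegral.integral_const_mul] at h
  unfold wt
  rw [h]
  simp only [one_mul, mul_one, zero_mul, mul_zero, sub_zero, one_pow]
  rw [← pow_add, show k + (m - k) = m by omega]
  by_cases h0 : k = 0
  · simp [h0]
  · simp [h0]

lemma wt_nonneg (p : ℝ) (m k : ℕ) (h0 : 0 ≤ p) (h1 : p ≤ 1) : 0 ≤ wt p m k := by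
  refine intervalIntegral.integral_nonneg zero_le_one fun u hu => ?_
  have : 0 ≤ 1 - p * u := by nlinarith [hu.1, hu.2]
  have : 0 ≤ u * (1 - p) := mul_nonneg hu.1 (by linarith)
  positivity

lemma wt_le (p : ℝ) (m k : ℕ) (h0 : 0 ≤ p) (h1 : p ≤ 1) (hk : k ≤ m - 1) :
    wt p m k ≤ wt p m 0 := by
  refine intervalIntegral.integral_mono_on zero_le_one (wt_ii _ _ _) (wt_ii _ _ _) fun u hu => ?_
  have a1 : 0 ≤ 1 - p * u := by nlinarith [hu.1, hu.2]
  have a2 : 0 ≤ u * (1 - p) := mul_nonneg hu.1 (by linarith)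
  have a3 : u * (1 - p) ≤ 1 - p * u := by nlinarith [hu.1, hu.2]
  calc _ ≤ (1 - p * u) ^ k * (1 - p * u) ^ (m - 1 - k) := by gcongr
    _ = _ := by rw [← pow_add, show k + (m - 1 - k) = m - 1 by omega]; simp

lemma wt_zero (p : ℝ) (m : ℕ) : m * (p * wt p m 0) = 1 - (1 - p) ^ m := by
  have := wt_id p m 0 (Nat.zero_le _)
  simp at this
  linarith

/-- pointwise exchange identity -/
lemma wt_sum {ι : Type*} (s : Finset ι) (p : ℝ) (A : ι → Prop) [DecidablePred A] [DecidableEq ι] :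
    ∑ j ∈ s, wt p s.card ((s.erase j).filter A).card * ((if A j then 1 else 0) - p) =
      (if ∃ j ∈ s, A j then 1 else 0) - (1 - (1 - p) ^ s.card) := by
  have hk : (s.filter A).card ≤ s.card := Finset.card_filter_le _ _
  rw [← Finset.sum_filter_add_sum_filter_not s A]
  have e1 : ∑ j ∈ s.filter A, wt p s.card ((s.erase j).filter A).card *
      ((if A j then 1 else 0) - p) = ∑ j ∈ s.filter A, wt p s.card ((s.filter A).card - 1) * (1 - p) := by
    refine Finset.sum_congr rfl fun j hj => ?_
    rw [Finset.filter_erase, Finset.card_erase_of_mem hj, if_pos (Finset.mem_filter.mp hj).2]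
  have e2 : ∑ j ∈ s.filter (fun j => ¬ A j), wt p s.card ((s.erase j).filter A).card *
      ((if A j then 1 else 0) - p) =
      ∑ j ∈ s.filter (fun j => ¬ A j), wt p s.card ((s.filter A).card) * (0 - p) := by
    refine Finset.sum_congr rfl fun j hj => ?_
    have hA := (Finset.mem_filter.mp hj).2
    rw [Finset.filter_erase, Finset.erase_eq_of_notMem (fun h => hA (Finset.mem_filter.mp h).2),
      if_neg hA]
  rw [e1, e2, Finset.sum_const, Finset.sum_const, nsmul_eq_mul, nsmul_eq_mul]
  have hc : ((s.filter (fun j => ¬ A j)).card : ℝ) = s.card - (s.filter A).card := by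
    have := Finset.card_filter_add_card_filter_not (s := s) A
    rw [← this]; push_cast; ring
  have := wt_id p s.card _ hk
  have h3 : (∃ j ∈ s, A j) ↔ ¬ (s.filter A).card = 0 := by
    rw [Finset.card_eq_zero, Finset.filter_eq_empty_iff]; push Not; rfl
  rw [hc]
  by_cases h4 : (s.filter A).card = 0
  · rw [if_pos h4] at this; rw [if_neg (by rw [h3]; simpa using h4)]; linarith
  · rw [if_neg h4] at this; rw [if_pos (h3.mpr h4)]; linarith


section Resample

variable {𝒳 : Type*} [MeasurableSpace 𝒳] (ν : Measure 𝒳) [IsProbabilityMeasure ν] {n : ℕ}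

lemma measurable_upd (j : Fin n) :
    Measurable (fun q : (Fin n → 𝒳) × 𝒳 => Function.update q.1 j q.2) := by
  refine measurable_pi_lambda _ fun i => ?_
  by_cases h : i = j
  · subst h; simpa using measurable_snd
  · simp only [Function.update_of_ne h]
    exact (measurable_pi_apply i).comp measurable_fst

lemma mp_upd (j : Fin n) :
    MeasurePreserving (fun q : (Fin n → 𝒳) × 𝒳 => Function.update q.1 j q.2)
      ((Measure.pi fun _ : Fin n => ν).prod ν) (Measure.pi fun _ : Fin n => ν) := by
  refine ⟨measurable_upd j, ?_⟩
  symm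
  refine Measure.pi_eq fun s hs => ?_
  rw [Measure.map_apply (measurable_upd j) (MeasurableSet.univ_pi hs)]
  have : (fun q : (Fin n → 𝒳) × 𝒳 => Function.update q.1 j q.2) ⁻¹' (univ.pi s) =
      (univ.pi (Function.update s j univ)) ×ˢ (s j) := by
    ext ⟨U, x⟩
    simp only [mem_preimage, mem_univ_pi, mem_prod]
    constructor
    · intro h
      refine ⟨fun i => ?_, by simpa using h j⟩
      by_cases hi : i = j
      · subst hi; simp
      · simpa [Function.update_of_ne hi] using h i
    · rintro ⟨h1, h2⟩ i
      by_cases hi : i = j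
      · subst hi; simpa using h2
      · simpa [Function.update_of_ne hi] using h1 i
  rw [this, Measure.prod_prod, Measure.pi_pi, ← Finset.mul_prod_erase _ _ (Finset.mem_univ j),
    ← Finset.mul_prod_erase _ (fun i => ν (s i)) (Finset.mem_univ j)]
  simp only [Function.update_self, measure_univ, one_mul]
  rw [mul_comm]
  congr 1
  refine Finset.prod_congr rfl fun i hi => ?_
  rw [Function.update_of_ne (Finset.ne_of_mem_erase hi)]

lemma int_upd (j : Fin n) (F : (Fin n → 𝒳) → ℝ) (hF : Measurable F) :
    ∫ U, F U ∂(Measure.pi fun _ : Fin n => ν) =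
      ∫ q, F (Function.update q.1 j q.2) ∂((Measure.pi fun _ : Fin n => ν).prod ν) := by
  rw [← (mp_upd ν j).map_eq, integral_map (measurable_upd j).aemeasurable]
  rw [(mp_upd ν j).map_eq]
  exact hF.aestronglyMeasurable

/-- split off first coordinate -/
lemma int_cons (F : (Fin (n+1) → 𝒳) → ℝ) (hF : Measurable F) (K : ℝ) (hK : ∀ U, |F U| ≤ K) :
    ∫ U, F U ∂(Measure.pi fun _ : Fin (n+1) => ν) =
      ∫ x, ∫ V, F (Fin.cons x V) ∂(Measure.pi fun _ : Fin n => ν) ∂ν := by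
  have mp := measurePreserving_piFinSuccAbove (fun _ : Fin (n+1) => ν) 0
  have h := mp.symm.integral_comp' (g := F)
  rw [← h]
  rw [integral_prod]
  · refine integral_congr_ae (ae_of_all _ fun x => integral_congr_ae (ae_of_all _ fun V => ?_))
    simp [MeasurableEquiv.piFinSuccAbove, Fin.insertNthEquiv, Fin.insertNth_zero']
  · refine bdd_integrable _ _ (hF.comp (MeasurableEquiv.measurable _)) K fun q => hK _

lemma measurable_cons_right (x : 𝒳) : Measurable (fun V : Fin n → 𝒳 => (Fin.cons x V : Fin (n+1) → 𝒳)) := by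
  refine measurable_pi_lambda _ fun i => ?_
  refine Fin.cases ?_ (fun i => ?_) i
  · simp
  · simpa using measurable_pi_apply i

lemma measurable_cons_pair :
    Measurable (fun q : 𝒳 × (Fin n → 𝒳) => (Fin.cons q.1 q.2 : Fin (n+1) → 𝒳)) := by
  refine measurable_pi_lambda _ fun i => ?_
  refine Fin.cases ?_ (fun i => ?_) i
  · simpa using measurable_fst
  · simp only [Fin.cons_succ]
    exact (measurable_pi_apply i).comp measurable_snd

lemma sq_bdd {a K : ℝ} (h : |a| ≤ K) : |a^2| ≤ K^2 := by
  rw [abs_pow]; gcongr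

lemma cs_int {Ω : Type*} [MeasurableSpace Ω] (Q : Measure Ω) [IsProbabilityMeasure Q] (f : Ω → ℝ)
    (hf : Measurable f) (K : ℝ) (hK : ∀ U, |f U| ≤ K) : (∫ ω, f ω ∂Q)^2 ≤ ∫ ω, (f ω)^2 ∂Q := by
  have i1 := bdd_integrable Q f hf K hK
  have i2 := bdd_integrable Q (fun ω => f ω ^ 2) (hf.pow_const 2) (K^2) fun ω => sq_bdd (hK ω)
  set c := ∫ ω, f ω ∂Q with hc
  have h : 0 ≤ ∫ ω, (f ω - c)^2 ∂Q := integral_nonneg fun _ => sq_nonneg _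
  have e : ∀ ω, (f ω - c)^2 = (f ω)^2 - (2*c*f ω - c^2) := fun ω => by ring
  simp_rw [e] at h
  have i3 : Integrable (fun ω => 2*c*f ω - c^2) Q := (i1.const_mul _).sub (integrable_const _)
  rw [integral_sub i2 i3, integral_sub (i1.const_mul _) (integrable_const _),
    integral_const_mul, ← hc] at h
  simp at h
  nlinarith

lemma var_le_const {Ω : Type*} [MeasurableSpace Ω] (Q : Measure Ω) [IsProbabilityMeasure Q]
    (f : Ω → ℝ) (hf : Measurable f) (K : ℝ) (hK : ∀ U, |f U| ≤ K) (c : ℝ) :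
    ∫ ω, (f ω - ∫ ω, f ω ∂Q)^2 ∂Q = ∫ ω, (f ω - c)^2 ∂Q - (∫ ω, f ω ∂Q - c)^2 := by
  have i1 := bdd_integrable Q f hf K hK
  have i2 := bdd_integrable Q (fun ω => f ω ^ 2) (hf.pow_const 2) (K^2) fun ω => sq_bdd (hK ω)
  have key : ∀ b : ℝ, ∫ ω, (f ω - b)^2 ∂Q = ∫ ω, (f ω)^2 ∂Q - (2*b*(∫ ω, f ω ∂Q) - b^2) := by
    intro b
    have e : ∀ ω, (f ω - b)^2 = (f ω)^2 - (2*b*f ω - b^2) := fun ω => by ring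
    simp_rw [e]
    have i3 : Integrable (fun ω => 2*b*f ω - b^2) Q := (i1.const_mul _).sub (integrable_const _)
    rw [integral_sub i2 i3, integral_sub (i1.const_mul _) (integrable_const _),
      integral_const_mul]
    simp
  rw [key, key]; ring

theorem efron_stein : ∀ (n : ℕ) (f : (Fin n → 𝒳) → ℝ) (g : Fin n → (Fin n → 𝒳) → ℝ)
    (K : ℝ), Measurable f → (∀ U, |f U| ≤ K) → (∀ k, Measurable (g k)) → (∀ k U, |g k U| ≤ K) →
    (∀ k U x, g k (Function.update U k x) = g k U) →
    ∫ U, (f U - ∫ U, f U ∂(Measure.pi fun _ : Fin n => ν))^2 ∂(Measure.pi fun _ : Fin n => ν) ≤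
      ∑ k, ∫ U, (f U - g k U)^2 ∂(Measure.pi fun _ : Fin n => ν) := by
  intro n
  induction n with
  | zero =>
    intro f g K hf hK hg hgK hgu
    have : ∀ U, f U = f (fun i => i.elim0) := fun U => by congr 1; exact Subsingleton.elim _ _
    simp only [Finset.univ_eq_empty, Finset.sum_empty]
    simp_rw [this]
    simp
  | succ n ih =>
    intro f g K hf hK hg hgK hgu
    set πn := Measure.pi fun _ : Fin n => ν
    set π1 := Measure.pi fun _ : Fin (n+1) => ν
    set m := ∫ U, f U ∂π1 with hm
    let F : 𝒳 → ℝ := fun x => ∫ V, f (Fin.cons x V) ∂πn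
    have fpm : Measurable fun q : 𝒳 × (Fin n → 𝒳) => f (Fin.cons q.1 q.2) :=
      hf.comp measurable_cons_pair
    have gpm : ∀ k, Measurable fun q : 𝒳 × (Fin n → 𝒳) => g k (Fin.cons q.1 q.2) := fun k =>
      (hg k).comp measurable_cons_pair
    have fcm : ∀ x, Measurable fun V : Fin n → 𝒳 => f (Fin.cons x V) := fun x =>
      hf.comp (measurable_cons_right x)
    have gcm : ∀ k x, Measurable fun V : Fin n → 𝒳 => g k (Fin.cons x V) := fun k x =>
      (hg k).comp (measurable_cons_right x)
    have hFm : Measurable F := fpm.stronglyMeasurable.integral_prod_right.measurable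
    have hFK : ∀ x, |F x| ≤ K := fun x => by
      have := norm_integral_le_of_norm_le_const (μ := πn) (C := K)
        (f := fun V => f (Fin.cons x V)) (ae_of_all _ fun V => hK _)
      simpa using this
    have hmF : m = ∫ x, F x ∂ν := int_cons ν f hf K hK
    have hmK : |m| ≤ K := by
      have := norm_integral_le_of_norm_le_const (μ := π1) (C := K)
        (f := f) (ae_of_all _ fun V => hK _)
      simpa using this
    have bd2 : ∀ a b : ℝ, |a| ≤ K → |b| ≤ K → |(a - b)^2| ≤ (K+K)^2 := fun a b ha hb =>
      sq_bdd ((abs_sub _ _).trans (add_le_add ha hb))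
    -- the conditional variances
    have e1 : ∫ U, (f U - m)^2 ∂π1 = ∫ x, ∫ V, (f (Fin.cons x V) - m)^2 ∂πn ∂ν :=
      int_cons ν _ ((hf.sub_const _).pow_const 2) _ (fun U => bd2 _ _ (hK U) hmK)
    have e2 : ∀ k, ∫ U, (f U - g k U)^2 ∂π1 =
        ∫ x, ∫ V, (f (Fin.cons x V) - g k (Fin.cons x V))^2 ∂πn ∂ν := fun k =>
      int_cons ν _ ((hf.sub (hg k)).pow_const 2) _ (fun U => bd2 _ _ (hK U) (hgK k U))
    let R : Fin (n+1) → 𝒳 → ℝ := fun k x =>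
      ∫ V, (f (Fin.cons x V) - g k (Fin.cons x V))^2 ∂πn
    have hRm : ∀ k, Measurable (R k) := fun k =>
      ((fpm.sub (gpm k)).pow_const 2).stronglyMeasurable.integral_prod_right.measurable
    have hRK : ∀ k x, |R k x| ≤ (K+K)^2 := fun k x => by
      have := norm_integral_le_of_norm_le_const (μ := πn) (C := (K+K)^2)
        (f := fun V => (f (Fin.cons x V) - g k (Fin.cons x V))^2)
        (ae_of_all _ fun V => bd2 _ _ (hK _) (hgK k _))
      simpa using this
    have iR : ∀ k, Integrable (R k) ν := fun k => bdd_integrable ν _ (hRm k) _ (hRK k)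
    have inner : ∀ x, ∫ V, (f (Fin.cons x V) - m)^2 ∂πn ≤
        ∑ k : Fin n, R k.succ x + (F x - m)^2 := by
      intro x
      have a := var_le_const πn (fun V => f (Fin.cons x V)) (fcm x) K (fun V => hK _) m
      have b := ih (fun V => f (Fin.cons x V)) (fun k V => g k.succ (Fin.cons x V)) K (fcm x)
        (fun V => hK _) (fun k => gcm _ x) (fun k V => hgK _ _) (fun k V y => by
          rw [Fin.cons_update]; exact hgu _ _ _)
      have : ∫ V, (f (Fin.cons x V) - m)^2 ∂πn =
        ∫ V, (f (Fin.cons x V) - F x)^2 ∂πn + (F x - m)^2 := by simp only [F]; linarith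
      rw [this]
      exact add_le_add_left b _
    have iF : Integrable (fun x => (F x - m)^2) ν :=
      bdd_integrable ν _ ((hFm.sub_const _).pow_const 2) _ fun x => bd2 _ _ (hFK x) hmK
    have iS : Integrable (fun x => ∑ k : Fin n, R k.succ x) ν :=
      integrable_finsetSum _ fun k _ => iR _
    have step1 : ∫ U, (f U - m)^2 ∂π1 ≤ ∑ k : Fin n, ∫ x, R k.succ x ∂ν + ∫ x, (F x - m)^2 ∂ν := by
      rw [e1, ← integral_finsetSum _ (fun k _ => iR _), ← integral_add iS iF]
      refine integral_mono ?_ (iS.add iF) inner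
      refine bdd_integrable ν _ ((fpm.sub_const m).pow_const 2).stronglyMeasurable.integral_prod_right.measurable ((K+K)^2) fun x => ?_
      have := norm_integral_le_of_norm_le_const (μ := πn) (C := (K+K)^2)
        (f := fun V => (f (Fin.cons x V) - m)^2)
        (ae_of_all _ fun V => bd2 _ _ (hK _) hmK)
      simpa using this
    have step2 : ∫ x, (F x - m)^2 ∂ν ≤ ∫ x, R 0 x ∂ν := by
      rcases isEmpty_or_nonempty 𝒳 with h | ⟨⟨x0⟩⟩
      · simp [integral_of_isEmpty]
      let c := ∫ V, g 0 (Fin.cons x0 V) ∂πn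
      have a := var_le_const ν F hFm K hFK c
      rw [hmF, a]
      have : ∫ x, (F x - c)^2 ∂ν ≤ ∫ x, R 0 x ∂ν := by
        refine integral_mono (bdd_integrable ν _ ((hFm.sub_const _).pow_const 2) ((K+K)^2)
          fun x => bd2 _ _ (hFK x) ?_) (iR 0) fun x => ?_
        · have := norm_integral_le_of_norm_le_const (μ := πn) (C := K)
            (f := fun V => g 0 (Fin.cons x0 V)) (ae_of_all _ fun V => hgK _ _)
          simpa using this
        · have hc : F x - c = ∫ V, (f (Fin.cons x V) - g 0 (Fin.cons x V)) ∂πn := by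
            rw [integral_sub (bdd_integrable _ _ (fcm x) K fun V => hK _)
              (bdd_integrable _ _ (gcm 0 x) K fun V => hgK _ _)]
            congr 1
            refine integral_congr_ae (ae_of_all _ fun V => ?_)
            have := hgu 0 (Fin.cons x0 V) x
            rw [Fin.update_cons_zero] at this
            exact this.symm
          simp only [hc]
          exact cs_int πn _ ((fcm x).sub (gcm 0 x)) (K+K)
            fun V => (abs_sub _ _).trans (add_le_add (hK _) (hgK _ _))
      nlinarith [sq_nonneg (∫ x, F x ∂ν - c)]
    rw [Fin.sum_univ_succ, e2]
    simp_rw [e2]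
    have := step1.trans (add_le_add_right step2 _)
    exact this.trans (le_of_eq (add_comm _ _))

end Resample


section Combi

variable {𝒳 : Type*} (near N3 : 𝒳 → 𝒳 → Prop) {n : ℕ}

def isoP (s : Finset (Fin n)) (U : Fin n → 𝒳) (i : Fin n) : Prop :=
  ∀ l ∈ s, l ≠ i → ¬ near (U i) (U l)

def Yc (s : Finset (Fin n)) (U : Fin n → 𝒳) : ℝ := ∑ i ∈ s, if isoP near s U i then 0 else 1

def Ad (s : Finset (Fin n)) (U : Fin n → 𝒳) (x : 𝒳) : ℝ :=
  (if ∃ l ∈ s, near (U l) x then 1 else 0) +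
    ∑ l ∈ s, if isoP near s U l ∧ near (U l) x then 1 else 0

variable {near N3}

lemma isoP_congr {s : Finset (Fin n)} {U V : Fin n → 𝒳} (h : ∀ l ∈ s, U l = V l) {i : Fin n}
    (hi : i ∈ s) : isoP near s U i ↔ isoP near s V i := by
  unfold isoP
  refine forall₂_congr fun l hl => ?_
  rw [h l hl, h i hi]

lemma Yc_congr {s : Finset (Fin n)} {U V : Fin n → 𝒳} (h : ∀ l ∈ s, U l = V l) :
    Yc near s U = Yc near s V := by
  unfold Yc
  refine Finset.sum_congr rfl fun i hi => ?_
  simp only [isoP_congr h hi]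

lemma Ad_congr {s : Finset (Fin n)} {U V : Fin n → 𝒳} (h : ∀ l ∈ s, U l = V l) (x : 𝒳) :
    Ad near s U x = Ad near s V x := by
  unfold Ad
  have e1 : (∃ l ∈ s, near (U l) x) ↔ (∃ l ∈ s, near (V l) x) := by
    refine exists_congr fun l => and_congr_right fun hl => ?_
    rw [h l hl]
  congr 1
  · simp only [e1]
  · refine Finset.sum_congr rfl fun i hi => ?_
    simp only [isoP_congr h hi, h i hi]

lemma Yc_insert (hs : ∀ x y, near x y → near y x) (s : Finset (Fin n)) (U : Fin n → 𝒳) (j : Fin n)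
    (hj : j ∉ s) : Yc near (insert j s) U = Yc near s U + Ad near s U (U j) := by
  unfold Yc Ad
  rw [Finset.sum_insert hj]
  have e1 : isoP near (insert j s) U j ↔ ¬ ∃ l ∈ s, near (U l) (U j) := by
    unfold isoP
    constructor
    · rintro h ⟨l, hl, hn⟩
      exact h l (Finset.mem_insert_of_mem hl) (fun e => hj (e ▸ hl)) (hs _ _ hn)
    · intro h l hl hne hn
      rcases Finset.mem_insert.mp hl with e | hl
      · exact hne e
      · exact h ⟨l, hl, hs _ _ hn⟩
  have e2 : ∀ l ∈ s, (if isoP near (insert j s) U l then (0:ℝ) else 1) =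
      (if isoP near s U l then 0 else 1) + (if isoP near s U l ∧ near (U l) (U j) then 1 else 0) := by
    intro l hl
    have : isoP near (insert j s) U l ↔ isoP near s U l ∧ ¬ near (U l) (U j) := by
      unfold isoP
      constructor
      · intro h
        exact ⟨fun k hk => h k (Finset.mem_insert_of_mem hk), h j (Finset.mem_insert_self _ _)
          (fun e => hj (e ▸ hl))⟩
      · rintro ⟨h1, h2⟩ k hk hne
        rcases Finset.mem_insert.mp hk with e | hk
        · rw [e]; exact h2
        · exact h1 k hk hne
    rw [this]
    by_cases a : isoP near s U l <;> by_cases b : near (U l) (U j) <;> simp [a, b]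
  rw [Finset.sum_congr rfl e2, Finset.sum_add_distrib, e1]
  by_cases a : ∃ l ∈ s, near (U l) (U j)
  · rw [if_neg (not_not.mpr a), if_pos a]; ring
  · rw [if_pos a, if_neg a]; ring

lemma Yc_update (hs : ∀ x y, near x y → near y x) (U : Fin n → 𝒳) (j : Fin n) (x : 𝒳) :
    Yc near Finset.univ (Function.update U j x) - Yc near Finset.univ U =
      Ad near (Finset.univ.erase j) U x - Ad near (Finset.univ.erase j) U (U j) := by
  have h := fun V : Fin n → 𝒳 => Yc_insert hs (Finset.univ.erase j) V j (Finset.notMem_erase _ _)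
  rw [Finset.insert_erase (Finset.mem_univ j)] at h
  rw [h, h, Function.update_self]
  have hc : ∀ l ∈ Finset.univ.erase j, Function.update U j x l = U l := fun l hl =>
    Function.update_of_ne (Finset.ne_of_mem_erase hl) _ _
  rw [Yc_congr hc, Ad_congr hc]
  ring

lemma Ad_nonneg (s : Finset (Fin n)) (U : Fin n → 𝒳) (x : 𝒳) : 0 ≤ Ad near s U x := by
  unfold Ad
  refine add_nonneg (by split_ifs <;> norm_num) (Finset.sum_nonneg fun i _ => ?_)
  split_ifs <;> norm_num

lemma Ad_le {κ : ℕ} (hpack : ∀ (x : 𝒳) (U : Fin n → 𝒳) (t : Finset (Fin n)),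
      (∀ i ∈ t, near (U i) x) → (∀ i ∈ t, ∀ j ∈ t, j ≠ i → ¬ near (U i) (U j)) → t.card ≤ κ)
    (s : Finset (Fin n)) (U : Fin n → 𝒳) (x : 𝒳) : Ad near s U x ≤ 1 + κ := by
  unfold Ad
  refine add_le_add (by split_ifs <;> norm_num) ?_
  rw [Finset.sum_boole]
  norm_cast
  refine hpack x U _ (fun i hi => (Finset.mem_filter.mp hi).2.2) fun i hi j hj hne => ?_
  exact (Finset.mem_filter.mp hi).2.1 j (Finset.mem_filter.mp hj).1 hne

lemma Ad_stable (s : Finset (Fin n)) (U : Fin n → 𝒳) (x : 𝒳) (k : Fin n)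
    (h1 : ¬ near (U k) x) (h2 : ∀ l, near (U l) x → ¬ near (U l) (U k)) :
    Ad near (s.erase k) U x = Ad near s U x := by
  unfold Ad
  have e1 : (∃ l ∈ s.erase k, near (U l) x) ↔ ∃ l ∈ s, near (U l) x := by
    constructor
    · rintro ⟨l, hl, h⟩; exact ⟨l, Finset.mem_of_mem_erase hl, h⟩
    · rintro ⟨l, hl, h⟩
      exact ⟨l, Finset.mem_erase.mpr ⟨fun e => h1 (e ▸ h), hl⟩, h⟩
  simp only [e1]
  congr 1
  rw [Finset.sum_boole, Finset.sum_boole]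
  congr 2
  ext l
  simp only [Finset.mem_filter, Finset.mem_erase]
  constructor
  · rintro ⟨⟨hne, hl⟩, hi, hn⟩
    refine ⟨hl, fun q hq hql => ?_, hn⟩
    by_cases hqk : q = k
    · rw [hqk]; exact h2 l hn
    · exact hi q (Finset.mem_erase.mpr ⟨hqk, hq⟩) hql
  · rintro ⟨hl, hi, hn⟩
    exact ⟨⟨fun e => h1 (e ▸ hn), hl⟩, fun q hq => hi q (Finset.mem_of_mem_erase hq), hn⟩

/-- neighbour count -/
def Nc (near : 𝒳 → 𝒳 → Prop) (s : Finset (Fin n)) (i j : Fin n) (U : Fin n → 𝒳) : ℕ :=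
  (((s.erase i).erase j).filter fun l => near (U i) (U l)).card

/-- integrand -/
def hI (near : 𝒳 → 𝒳 → Prop) (p : ℝ) (s : Finset (Fin n)) (i j : Fin n) (U : Fin n → 𝒳) (x : 𝒳) :
    ℝ :=
  wt p (n - 1) (Nc near s i j U) * (if near (U i) x then 1 else 0) *
    (Ad near (s.erase j) U x - Ad near (s.erase j) U (U j))

lemma Nc_le (s : Finset (Fin n)) (i j : Fin n) (hij : i ≠ j) (U : Fin n → 𝒳) :
    Nc near s i j U ≤ n - 1 - 1 := by
  unfold Nc
  refine (Finset.card_filter_le _ _).trans ?_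
  have : ((s.erase i).erase j) ⊆ ((Finset.univ.erase i).erase j) :=
    Finset.erase_subset_erase _ (Finset.erase_subset_erase _ (Finset.subset_univ _))
  refine (Finset.card_le_card this).trans ?_
  rw [Finset.card_erase_of_mem (by simp [hij.symm]), Finset.card_erase_of_mem (by simp)]
  simp

lemma Nc_congr {s : Finset (Fin n)} {U V : Fin n → 𝒳} {i j : Fin n} (hi : U i = V i)
    (h : ∀ l ∈ s, l ≠ j → U l = V l) : Nc near s i j U = Nc near s i j V := by
  unfold Nc
  congr 1
  refine Finset.filter_congr fun l hl => ?_
  simp only [Finset.mem_erase] at hl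
  rw [hi, h l hl.2.2 hl.1]

lemma hI_congr {p : ℝ} {s : Finset (Fin n)} {U V : Fin n → 𝒳} {i j : Fin n} (hi : i ∈ s) (hj : j ∈ s)
    (h : ∀ l ∈ s, U l = V l) (x : 𝒳) : hI near p s i j U x = hI near p s i j V x := by
  unfold hI
  rw [Nc_congr (h i hi) (fun l hl _ => h l hl), h i hi, h j hj,
    Ad_congr (fun l hl => h l (Finset.mem_of_mem_erase hl)),
    Ad_congr (fun l hl => h l (Finset.mem_of_mem_erase hl))]

lemma hI_abs {κ : ℕ} (hpack : ∀ (x : 𝒳) (U : Fin n → 𝒳) (t : Finset (Fin n)),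
      (∀ i ∈ t, near (U i) x) → (∀ i ∈ t, ∀ j ∈ t, j ≠ i → ¬ near (U i) (U j)) → t.card ≤ κ)
    {p : ℝ} (h0 : 0 ≤ p) (h1 : p ≤ 1) (s : Finset (Fin n)) (i j : Fin n) (hij : i ≠ j)
    (U : Fin n → 𝒳) (x : 𝒳) :
    |hI near p s i j U x| ≤ (wt p (n-1) 0 * (1 + κ)) * (if near (U i) x then 1 else 0) := by
  unfold hI
  rw [abs_mul, abs_mul, abs_of_nonneg (wt_nonneg _ _ _ h0 h1)]
  have a := wt_le p (n-1) (Nc near s i j U) h0 h1 (Nc_le s i j hij U)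
  have b : |Ad near (s.erase j) U x - Ad near (s.erase j) U (U j)| ≤ 1 + κ := by
    have := Ad_nonneg (near := near) (s.erase j) U x
    have := Ad_nonneg (near := near) (s.erase j) U (U j)
    have := Ad_le hpack (s.erase j) U x
    have := Ad_le hpack (s.erase j) U (U j)
    rw [abs_le]; constructor <;> linarith
  have := wt_nonneg p (n-1) 0 h0 h1
  split_ifs
  · rw [abs_one, mul_one, mul_one]; exact mul_le_mul a b (abs_nonneg _) this
  · simp

lemma hI_diff {κ : ℕ} (hpack : ∀ (x : 𝒳) (U : Fin n → 𝒳) (t : Finset (Fin n)),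
      (∀ i ∈ t, near (U i) x) → (∀ i ∈ t, ∀ j ∈ t, j ≠ i → ¬ near (U i) (U j)) → t.card ≤ κ)
    (hs : ∀ x y, near x y → near y x)
    (i1 : ∀ x y, near x y → N3 x y) (i2 : ∀ x y z, near x y → near y z → N3 x z)
    (i3 : ∀ x y z t, near x y → near y z → near z t → N3 x t)
    {p : ℝ} (h0 : 0 ≤ p) (h1 : p ≤ 1) (i j k : Fin n) (hij : i ≠ j) (hik : i ≠ k) (hjk : j ≠ k)
    (U : Fin n → 𝒳) (x : 𝒳) :
    |hI near p Finset.univ i j U x - hI near p (Finset.univ.erase k) i j U x| ≤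
      (wt p (n-1) 0 * (1 + κ)) * (2 * (if N3 (U i) (U k) then 1 else 0) +
        (if N3 (U j) (U k) then 1 else 0)) * (if near (U i) x then 1 else 0) := by
  have w0 := wt_nonneg p (n-1) 0 h0 h1
  by_cases hn : near (U i) x
  swap
  · simp [hI, hn]
  have a1 := hI_abs hpack h0 h1 Finset.univ i j hij U x
  have a2 := hI_abs hpack h0 h1 (Finset.univ.erase k) i j hij U x
  rw [if_pos hn, mul_one] at a1 a2 ⊢
  have hc : 0 ≤ wt p (n-1) 0 * (1 + κ) := by positivity
  by_cases hA : N3 (U i) (U k)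
  · rw [if_pos hA]
    refine (abs_sub _ _).trans ?_
    have : 0 ≤ (if N3 (U j) (U k) then (1:ℝ) else 0) := by split_ifs <;> norm_num
    nlinarith
  rw [if_neg hA]
  have hN : Nc near (Finset.univ.erase k) i j U = Nc near Finset.univ i j U := by
    unfold Nc
    congr 1
    ext l
    simp only [Finset.mem_filter, Finset.mem_erase, Finset.mem_univ, and_true]
    constructor
    · rintro ⟨⟨b1, b2, b3⟩, b4⟩; exact ⟨⟨b1, b2⟩, b4⟩
    · rintro ⟨⟨b1, b2⟩, b4⟩
      exact ⟨⟨b1, b2, fun e => hA (i1 _ _ (e ▸ b4))⟩, b4⟩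
  have eA : Ad near ((Finset.univ.erase k).erase j) U x = Ad near (Finset.univ.erase j) U x := by
    rw [Finset.erase_right_comm]
    exact Ad_stable _ U x k (fun h => hA (i2 _ _ _ hn (hs _ _ h)))
      (fun l hl hlk => hA (i3 _ _ _ _ hn (hs _ _ hl) hlk))
  unfold hI
  rw [hN, eA, if_pos hn, mul_one, ← mul_sub, abs_mul, abs_of_nonneg (wt_nonneg _ _ _ h0 h1)]
  have wl := wt_le p (n-1) (Nc near Finset.univ i j U) h0 h1 (Nc_le Finset.univ i j hij U)
  rw [mul_assoc]
  refine mul_le_mul wl ?_ (abs_nonneg _) w0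
  by_cases hB : N3 (U j) (U k)
  · rw [if_pos hB]
    have := Ad_nonneg (near := near) ((Finset.univ.erase k).erase j) U (U j)
    have := Ad_nonneg (near := near) (Finset.univ.erase j) U (U j)
    have := Ad_le hpack ((Finset.univ.erase k).erase j) U (U j)
    have := Ad_le hpack (Finset.univ.erase j) U (U j)
    rw [abs_le]; constructor <;> linarith
  · have eB : Ad near ((Finset.univ.erase k).erase j) U (U j) =
        Ad near (Finset.univ.erase j) U (U j) := by
      rw [Finset.erase_right_comm]
      exact Ad_stable _ U (U j) k (fun h => hB (i1 _ _ (hs _ _ h)))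
        (fun l hl hlk => hB (i2 _ _ _ (hs _ _ hl) hlk))
    rw [eB, if_neg hB]
    simp

/-- exchange identity for the number of non-isolated points -/
lemma Yc_exchange (p : ℝ) (U : Fin n → 𝒳) :
    Yc near Finset.univ U - n * (1 - (1 - p)^(n-1)) =
      ∑ i, ∑ j ∈ Finset.univ.erase i,
        wt p (n-1) (Nc near Finset.univ i j U) * ((if near (U i) (U j) then 1 else 0) - p) := by
  have h : ∀ i : Fin n, (if isoP near Finset.univ U i then (0:ℝ) else 1) - (1 - (1 - p)^(n-1)) =
      ∑ j ∈ Finset.univ.erase i,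
        wt p (n-1) (Nc near Finset.univ i j U) * ((if near (U i) (U j) then 1 else 0) - p) := by
    intro i
    have := wt_sum (Finset.univ.erase i) p (fun j => near (U i) (U j))
    have hc : (Finset.univ.erase i).card = n - 1 := by
      rw [Finset.card_erase_of_mem (Finset.mem_univ _)]; simp
    rw [hc] at this
    unfold Nc
    rw [this]
    congr 1
    have e : (∃ j ∈ Finset.univ.erase i, near (U i) (U j)) ↔ ¬ isoP near Finset.univ U i := by
      unfold isoP
      push Not
      simp
    by_cases a : isoP near Finset.univ U i
    · rw [if_pos a, if_neg (by rw [e]; exact not_not.mpr a)]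
    · rw [if_neg a, if_pos (e.mpr a)]
  simp_rw [← h]
  unfold Yc
  rw [Finset.sum_sub_distrib]
  simp
  ring

end Combi


section GeoProb

variable {𝒳 : Type*} [MeasurableSpace 𝒳]

structure Geo (ν : Measure 𝒳) (n κ : ℕ) (near N3 : 𝒳 → 𝒳 → Prop) (p q : ℝ) : Prop where
  hn : 2 ≤ n
  hm : MeasurableSet {r : 𝒳 × 𝒳 | near r.1 r.2}
  hm3 : MeasurableSet {r : 𝒳 × 𝒳 | N3 r.1 r.2}
  hs : ∀ x y, near x y → near y x
  i1 : ∀ x y, near x y → N3 x y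
  i2 : ∀ x y z, near x y → near y z → N3 x z
  i3 : ∀ x y z t, near x y → near y z → near z t → N3 x t
  hp : ∀ x, ν.real {y | near x y} = p
  hq : ∀ x, ν.real {y | N3 y x} ≤ q
  hq0 : 0 ≤ q
  pack : ∀ (x : 𝒳) (U : Fin n → 𝒳) (t : Finset (Fin n)),
      (∀ i ∈ t, near (U i) x) → (∀ i ∈ t, ∀ j ∈ t, j ≠ i → ¬ near (U i) (U j)) → t.card ≤ κ

variable {ν : Measure 𝒳} [IsProbabilityMeasure ν] {n κ : ℕ} {near N3 : 𝒳 → 𝒳 → Prop} {p q : ℝ}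

lemma rel_meas {R : 𝒳 → 𝒳 → Prop} (hm : MeasurableSet {r : 𝒳 × 𝒳 | R r.1 r.2})
    {α : Type*} [MeasurableSpace α] {y z : α → 𝒳} (hy : Measurable y) (hz : Measurable z) :
    Measurable fun a => R (y a) (z a) :=
  measurableSet_setOf.mp ((hy.prodMk hz) hm)

lemma ite_meas {α : Type*} [MeasurableSpace α] {P : α → Prop} [∀ a, Decidable (P a)] (h : Measurable P)
    (c d : ℝ) :
    Measurable fun a => if P a then c else d :=
  Measurable.ite (measurableSet_setOf.mpr h) measurable_const measurable_const

variable {α : Type*} [MeasurableSpace α] {V : α → Fin n → 𝒳} {y : α → 𝒳}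

lemma isoP_meas (hm : MeasurableSet {r : 𝒳 × 𝒳 | near r.1 r.2}) (hV : Measurable V)
    (s : Finset (Fin n)) (i : Fin n) : Measurable fun a => isoP near s (V a) i := by
  unfold isoP
  refine Measurable.forall fun l => ?_
  refine Measurable.imp measurable_const (Measurable.imp measurable_const ?_)
  exact (rel_meas hm ((measurable_pi_apply i).comp hV) ((measurable_pi_apply l).comp hV)).not

lemma Yc_meas (hm : MeasurableSet {r : 𝒳 × 𝒳 | near r.1 r.2}) (hV : Measurable V)
    (s : Finset (Fin n)) : Measurable fun a => Yc near s (V a) := by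
  unfold Yc
  exact Finset.measurable_sum _ fun i _ => ite_meas (isoP_meas hm hV s i) _ _

lemma Ad_meas (hm : MeasurableSet {r : 𝒳 × 𝒳 | near r.1 r.2}) (hV : Measurable V)
    (hy : Measurable y) (s : Finset (Fin n)) : Measurable fun a => Ad near s (V a) (y a) := by
  unfold Ad
  refine Measurable.add (ite_meas (Measurable.exists fun l => ?_) _ _)
    (Finset.measurable_sum _ fun i _ => ite_meas ((isoP_meas hm hV s i).and ?_) _ _)
  · exact measurable_const.and (rel_meas hm ((measurable_pi_apply l).comp hV) hy)
  · exact rel_meas hm ((measurable_pi_apply i).comp hV) hy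

lemma wtNc_meas (hm : MeasurableSet {r : 𝒳 × 𝒳 | near r.1 r.2}) (hV : Measurable V)
    (s : Finset (Fin n)) (i j : Fin n) (p : ℝ) (m : ℕ) :
    Measurable fun a => wt p m (Nc near s i j (V a)) := by
  have : Measurable fun a => Nc near s i j (V a) := by
    unfold Nc
    simp_rw [Finset.card_filter]
    refine Finset.measurable_sum _ fun l _ => ?_
    exact Measurable.ite (measurableSet_setOf.mpr (rel_meas hm ((measurable_pi_apply i).comp hV)
      ((measurable_pi_apply l).comp hV))) measurable_const measurable_const
  exact (Measurable.of_discrete (f := fun k : ℕ => wt p m k)).comp this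

lemma hI_meas (hm : MeasurableSet {r : 𝒳 × 𝒳 | near r.1 r.2}) (hV : Measurable V)
    (hy : Measurable y) (s : Finset (Fin n)) (i j : Fin n) (p : ℝ) :
    Measurable fun a => hI near p s i j (V a) (y a) := by
  unfold hI
  exact ((wtNc_meas hm hV s i j p _).mul (ite_meas (rel_meas hm
    ((measurable_pi_apply i).comp hV) hy) _ _)).mul ((Ad_meas hm hV hy _).sub
    (Ad_meas hm hV ((measurable_pi_apply j).comp hV) _))

lemma Yc_nonneg (s : Finset (Fin n)) (U : Fin n → 𝒳) : 0 ≤ Yc near s U :=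
  Finset.sum_nonneg fun i _ => by split_ifs <;> norm_num

lemma Yc_le (U : Fin n → 𝒳) : Yc near Finset.univ U ≤ n := by
  unfold Yc
  calc _ ≤ ∑ i : Fin n, (1:ℝ) := Finset.sum_le_sum fun i _ => by split_ifs <;> norm_num
    _ = n := by simp

namespace Geo

variable (G : Geo ν n κ near N3 p q)
include G

lemma p0 : 0 ≤ p := by
  haveI : Nonempty 𝒳 := nonempty_of_isProbabilityMeasure ν
  rw [← G.hp (Classical.arbitrary 𝒳)]; exact measureReal_nonneg

lemma p1 : p ≤ 1 := by
  haveI : Nonempty 𝒳 := nonempty_of_isProbabilityMeasure ν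
  rw [← G.hp (Classical.arbitrary 𝒳)]; exact measureReal_le_one

lemma ind_int (c : ℝ) (z : 𝒳) : ∫ x, c * (if near z x then 1 else 0) ∂ν = c * p := by
  rw [integral_const_mul, ← G.hp z]
  congr 1
  have hms : MeasurableSet {y | near z y} :=
    measurableSet_setOf.mpr (rel_meas G.hm measurable_const measurable_id)
  rw [← integral_indicator_one hms]
  refine integral_congr_ae (ae_of_all _ fun x => ?_)
  simp [Set.indicator_apply]

lemma int_fst (F : (Fin n → 𝒳) → ℝ) :
    ∫ r, F r.1 ∂((Measure.pi fun _ : Fin n => ν).prod ν) =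
      ∫ U, F U ∂(Measure.pi fun _ : Fin n => ν) := by
  rw [integral_fun_fst]; simp

lemma wt_bd (U : Fin n → 𝒳) (i j : Fin n) (hij : i ≠ j) :
    |wt p (n-1) (Nc near Finset.univ i j U)| ≤ wt p (n-1) 0 := by
  rw [abs_of_nonneg (wt_nonneg _ _ _ G.p0 G.p1)]
  exact wt_le _ _ _ G.p0 G.p1 (Nc_le _ _ _ hij _)

lemma term_exch (F : (Fin n → 𝒳) → ℝ) (hF : Measurable F) (K : ℝ) (hK : ∀ U, |F U| ≤ K)
    (i j : Fin n) (hij : i ≠ j) :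
    ∫ U, wt p (n-1) (Nc near Finset.univ i j U) * ((if near (U i) (U j) then 1 else 0) - p) * F U
        ∂(Measure.pi fun _ : Fin n => ν) =
      ∫ r, wt p (n-1) (Nc near Finset.univ i j r.1) * (if near (r.1 i) r.2 then 1 else 0) *
        (F (Function.update r.1 j r.2) - F r.1) ∂((Measure.pi fun _ : Fin n => ν).prod ν) := by
  have w0 := wt_nonneg p (n-1) 0 G.p0 G.p1
  have mw : Measurable fun U : Fin n → 𝒳 => wt p (n-1) (Nc near Finset.univ i j U) :=
    wtNc_meas G.hm measurable_id _ _ _ _ _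
  have mw2 : Measurable fun r : (Fin n → 𝒳) × 𝒳 => wt p (n-1) (Nc near Finset.univ i j r.1) :=
    mw.comp measurable_fst
  have mi : Measurable fun U : Fin n → 𝒳 => (if near (U i) (U j) then (1:ℝ) else 0) :=
    ite_meas (rel_meas G.hm (measurable_pi_apply i) (measurable_pi_apply j)) _ _
  have mi2 : Measurable fun r : (Fin n → 𝒳) × 𝒳 => (if near (r.1 i) r.2 then (1:ℝ) else 0) :=
    ite_meas (rel_meas G.hm ((measurable_pi_apply i).comp measurable_fst) measurable_snd) _ _
  have bi : ∀ P : Prop, |(if P then (1:ℝ) else 0)| ≤ 1 := fun P => by split_ifs <;> simp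
  have bd3 : ∀ a b c : ℝ, |a| ≤ wt p (n-1) 0 → |b| ≤ 1 → |c| ≤ K →
      |a * b * c| ≤ wt p (n-1) 0 * 1 * K := fun a b c ha hb hc => by
    rw [abs_mul, abs_mul]
    exact mul_le_mul (mul_le_mul ha hb (abs_nonneg _) w0) hc (abs_nonneg _) (by positivity)
  have i1 : Integrable (fun r : (Fin n → 𝒳) × 𝒳 => wt p (n-1) (Nc near Finset.univ i j r.1) *
      (if near (r.1 i) r.2 then 1 else 0) * F (Function.update r.1 j r.2))
      ((Measure.pi fun _ : Fin n => ν).prod ν) :=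
    bdd_integrable _ _ ((mw2.mul mi2).mul (hF.comp (measurable_upd j))) _
      fun r => bd3 _ _ _ (G.wt_bd _ _ _ hij) (bi _) (hK _)
  have i2 : Integrable (fun r : (Fin n → 𝒳) × 𝒳 => wt p (n-1) (Nc near Finset.univ i j r.1) *
      (if near (r.1 i) r.2 then 1 else 0) * F r.1)
      ((Measure.pi fun _ : Fin n => ν).prod ν) :=
    bdd_integrable _ _ ((mw2.mul mi2).mul (hF.comp measurable_fst)) _
      fun r => bd3 _ _ _ (G.wt_bd _ _ _ hij) (bi _) (hK _)
  have j1 : Integrable (fun U : Fin n → 𝒳 => wt p (n-1) (Nc near Finset.univ i j U) *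
      (if near (U i) (U j) then 1 else 0) * F U) (Measure.pi fun _ : Fin n => ν) :=
    bdd_integrable _ _ ((mw.mul mi).mul hF) _
      fun r => bd3 _ _ _ (G.wt_bd _ _ _ hij) (bi _) (hK _)
  have j2 : Integrable (fun U : Fin n → 𝒳 => wt p (n-1) (Nc near Finset.univ i j U) *
      p * F U) (Measure.pi fun _ : Fin n => ν) :=
    bdd_integrable _ _ ((mw.mul_const p).mul hF) _
      fun r => bd3 _ _ _ (G.wt_bd _ _ _ hij) (by rw [abs_of_nonneg G.p0]; exact G.p1) (hK _)
  simp_rw [mul_sub, sub_mul]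
  rw [integral_sub i1 i2, integral_sub j1 j2]
  congr 1
  · have mF : Measurable fun U : Fin n → 𝒳 => wt p (n-1) (Nc near Finset.univ i j U) *
      (if near (U i) (U j) then 1 else 0) * F U := (mw.mul mi).mul hF
    rw [int_upd ν j _ mF]
    refine integral_congr_ae (ae_of_all _ fun r => ?_)
    simp only [Function.update_self, Function.update_of_ne hij]
    rw [Nc_congr (V := r.1) (Function.update_of_ne hij _ _)
      (fun l _ hl => Function.update_of_ne hl _ _)]
  · rw [integral_prod _ i2]
    refine integral_congr_ae (ae_of_all _ fun U => ?_)
    simp only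
    have e : ∀ x, wt p (n-1) (Nc near Finset.univ i j U) * (if near (U i) x then 1 else 0) * F U =
      (wt p (n-1) (Nc near Finset.univ i j U) * F U) * (if near (U i) x then 1 else 0) :=
      fun x => by ring
    simp_rw [e]
    rw [G.ind_int]; ring

lemma exch (F : (Fin n → 𝒳) → ℝ) (hF : Measurable F) (K : ℝ) (hK : ∀ U, |F U| ≤ K) :
    ∫ U, (Yc near Finset.univ U - n * (1 - (1 - p)^(n-1))) * F U ∂(Measure.pi fun _ : Fin n => ν) =
      ∑ i, ∑ j ∈ Finset.univ.erase i,
      ∫ r, wt p (n-1) (Nc near Finset.univ i j r.1) * (if near (r.1 i) r.2 then 1 else 0) *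
        (F (Function.update r.1 j r.2) - F r.1) ∂((Measure.pi fun _ : Fin n => ν).prod ν) := by
  have hint : ∀ i, ∀ j ∈ Finset.univ.erase i, Integrable (fun U : Fin n → 𝒳 =>
      wt p (n-1) (Nc near Finset.univ i j U) * ((if near (U i) (U j) then 1 else 0) - p) * F U)
      (Measure.pi fun _ : Fin n => ν) := by
    intro i j hj
    have mw : Measurable fun U : Fin n → 𝒳 => wt p (n-1) (Nc near Finset.univ i j U) :=
      wtNc_meas G.hm measurable_id _ _ _ _ _
    have mi : Measurable fun U : Fin n → 𝒳 => (if near (U i) (U j) then (1:ℝ) else 0) :=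
      ite_meas (rel_meas G.hm (measurable_pi_apply i) (measurable_pi_apply j)) _ _
    refine bdd_integrable _ _ ((mw.mul (mi.sub_const p)).mul hF) (wt p (n-1) 0 * 1 * K) fun U => ?_
    have w0 := wt_nonneg p (n-1) 0 G.p0 G.p1
    rw [abs_mul, abs_mul]
    refine mul_le_mul (mul_le_mul (G.wt_bd _ _ _ (Finset.ne_of_mem_erase hj).symm) ?_
      (abs_nonneg _) w0) (hK U) (abs_nonneg _) (by positivity)
    have := G.p0
    have := G.p1
    rw [abs_le]; constructor <;> split_ifs <;> linarith
  simp_rw [Yc_exchange p, Finset.sum_mul]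
  rw [integral_finsetSum _ fun i _ => integrable_finsetSum _ (hint i)]
  refine Finset.sum_congr rfl fun i _ => ?_
  rw [integral_finsetSum _ (hint i)]
  exact Finset.sum_congr rfl fun j hj => G.term_exch F hF K hK i j (Finset.ne_of_mem_erase hj).symm

lemma mean : ∫ U, Yc near Finset.univ U ∂(Measure.pi fun _ : Fin n => ν) =
    n * (1 - (1 - p)^(n-1)) := by
  have h := G.exch (fun _ => 1) measurable_const 1 (fun _ => by simp)
  simp only [mul_one, sub_self, mul_zero, integral_zero, Finset.sum_const_zero] at h
  have iY : Integrable (fun U => Yc near Finset.univ U) (Measure.pi fun _ : Fin n => ν) :=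
    bdd_integrable _ _ (Yc_meas G.hm measurable_id _) n fun U => by
      rw [abs_of_nonneg (Yc_nonneg _ _)]; exact Yc_le U
  rw [integral_sub iY (integrable_const _)] at h
  simp only [integral_const, probReal_univ, smul_eq_mul, one_mul] at h
  linarith

end Geo
end GeoProb


section GeoVar

variable {𝒳 : Type*} [MeasurableSpace 𝒳]
variable {ν : Measure 𝒳} [IsProbabilityMeasure ν] {n κ : ℕ} {near N3 : 𝒳 → 𝒳 → Prop} {p q : ℝ}

def bI (N3 : 𝒳 → 𝒳 → Prop) (k l : Fin n) (U : Fin n → 𝒳) : ℝ :=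
  if l ≠ k ∧ N3 (U l) (U k) then 1 else 0

def KK (N3 : 𝒳 → 𝒳 → Prop) (k : Fin n) (U : Fin n → 𝒳) : ℝ := ∑ l, bI N3 k l U

lemma bI_nonneg (k l : Fin n) (U : Fin n → 𝒳) : 0 ≤ bI N3 k l U := by
  unfold bI; split_ifs <;> norm_num

lemma bI_le (k l : Fin n) (U : Fin n → 𝒳) : bI N3 k l U ≤ 1 := by
  unfold bI; split_ifs <;> norm_num

def Phi (ν : Measure 𝒳) (near : 𝒳 → 𝒳 → Prop) (p : ℝ) (U : Fin n → 𝒳) : ℝ :=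
  ∑ i, ∑ j, if i ≠ j then ∫ x, hI near p Finset.univ i j U x ∂ν else 0

def Phik (ν : Measure 𝒳) (near : 𝒳 → 𝒳 → Prop) (p : ℝ) (k : Fin n) (U : Fin n → 𝒳) : ℝ :=
  ∑ i, ∑ j, if i ≠ j ∧ i ≠ k ∧ j ≠ k then ∫ x, hI near p (Finset.univ.erase k) i j U x ∂ν else 0

lemma sum_ne (f : Fin n → ℝ) :
    ∑ i : Fin n, ∑ j : Fin n, (if i ≠ j then f i else 0) = ((n:ℝ) - 1) * ∑ i, f i := by
  rw [Finset.mul_sum]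
  refine Finset.sum_congr rfl fun i _ => ?_
  have : ∀ j, (if i ≠ j then f i else 0) = f i - (if i = j then f i else 0) := fun j => by
    by_cases h : i = j <;> simp [h]
  simp_rw [this]
  rw [Finset.sum_sub_distrib, Finset.sum_ite_eq]
  simp; ring

lemma sum_ne' (f : Fin n → ℝ) :
    ∑ i : Fin n, ∑ j : Fin n, (if i ≠ j then f j else 0) = ((n:ℝ) - 1) * ∑ i, f i := by
  rw [Finset.sum_comm, ← sum_ne]
  refine Finset.sum_congr rfl fun i _ => Finset.sum_congr rfl fun j _ => ?_
  by_cases h : i = j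
  · simp [h]
  · simp [h, Ne.symm h]

namespace Geo

variable (G : Geo ν n κ near N3 p q)
include G

lemma bI_meas (k l : Fin n) : Measurable (bI N3 k l : (Fin n → 𝒳) → ℝ) := by
  unfold bI
  exact ite_meas (measurable_const.and (rel_meas G.hm3 (measurable_pi_apply l)
    (measurable_pi_apply k))) _ _

lemma avg (k l : Fin n) (hkl : l ≠ k) (F : (Fin n → 𝒳) → ℝ) (hF : Measurable F) (K : ℝ)
    (hK : ∀ U, F U ≤ K) (hF0 : ∀ U, 0 ≤ F U) (hu : ∀ U x, F (Function.update U l x) = F U) :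
    ∫ U, bI N3 k l U * F U ∂(Measure.pi fun _ : Fin n => ν) ≤
      q * ∫ U, F U ∂(Measure.pi fun _ : Fin n => ν) := by
  have hKa : ∀ U, |F U| ≤ K := fun U => by rw [abs_of_nonneg (hF0 U)]; exact hK U
  have m1 : Measurable fun U => bI N3 k l U * F U := (G.bI_meas k l).mul hF
  rw [int_upd ν l _ m1, ← integral_const_mul]
  have m2 : Measurable fun r : (Fin n → 𝒳) × 𝒳 =>
      bI N3 k l (Function.update r.1 l r.2) * F (Function.update r.1 l r.2) :=
    m1.comp (measurable_upd l)
  have b2 : ∀ r : (Fin n → 𝒳) × 𝒳,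
      |bI N3 k l (Function.update r.1 l r.2) * F (Function.update r.1 l r.2)| ≤ 1 * K := fun r => by
    rw [abs_mul]
    refine mul_le_mul ?_ (hKa _) (abs_nonneg _) zero_le_one
    rw [abs_of_nonneg (bI_nonneg _ _ _)]; exact bI_le _ _ _
  have i1 := bdd_integrable ((Measure.pi fun _ : Fin n => ν).prod ν) _ m2 _ b2
  rw [integral_prod _ i1]
  refine integral_mono i1.integral_prod_left ((bdd_integrable _ _ hF K hKa).const_mul _)
    fun U => ?_
  simp only [hu]
  have e : ∀ x, bI N3 k l (Function.update U l x) = if N3 x (U k) then 1 else 0 := fun x => by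
    unfold bI
    simp [hkl, Function.update_of_ne hkl.symm]
  simp_rw [e]
  rw [integral_mul_const]
  refine mul_le_mul_of_nonneg_right ?_ (hF0 U)
  refine le_trans (le_of_eq ?_) (G.hq (U k))
  have hms : MeasurableSet {y | N3 y (U k)} :=
    measurableSet_setOf.mpr (rel_meas G.hm3 measurable_id measurable_const)
  rw [← integral_indicator_one hms]
  refine integral_congr_ae (ae_of_all _ fun x => ?_)
  simp [Set.indicator_apply]

lemma KK_meas (k : Fin n) : Measurable (KK N3 k : (Fin n → 𝒳) → ℝ) := by
  unfold KK
  exact Finset.measurable_sum _ fun l _ => G.bI_meas k l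

omit G in
lemma KK_nonneg (k : Fin n) (U : Fin n → 𝒳) : 0 ≤ KK N3 k U :=
  Finset.sum_nonneg fun l _ => bI_nonneg _ _ _

omit G in
lemma KK_le (k : Fin n) (U : Fin n → 𝒳) : KK N3 k U ≤ n := by
  unfold KK
  calc _ ≤ ∑ i : Fin n, (1:ℝ) := Finset.sum_le_sum fun i _ => bI_le _ _ _
    _ = n := by simp

omit G in
lemma bI_self (k : Fin n) (U : Fin n → 𝒳) : bI N3 k k U = 0 := by simp [bI]

omit G in
lemma sum_q (k : Fin n) (c : ℝ) : ∑ l : Fin n, (if l = k then 0 else c) = ((n:ℝ) - 1) * c := by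
  have : ∀ l, (if l = k then 0 else c) = c - (if l = k then c else 0) := fun l => by
    split_ifs <;> ring
  simp_rw [this]
  rw [Finset.sum_sub_distrib, Finset.sum_ite_eq']
  simp; ring

lemma EK (k : Fin n) :
    ∫ U, KK N3 k U ∂(Measure.pi fun _ : Fin n => ν) ≤ ((n:ℝ) - 1) * q := by
  unfold KK
  rw [integral_finsetSum _ fun l _ => bdd_integrable _ _ (G.bI_meas k l) 1 fun U => by
    rw [abs_of_nonneg (bI_nonneg _ _ _)]; exact bI_le _ _ _]
  rw [← sum_q k q]
  refine Finset.sum_le_sum fun l _ => ?_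
  by_cases h : l = k
  · simp [h, bI_self]
  · rw [if_neg h]
    have := G.avg k l h (fun _ => 1) measurable_const 1 (fun _ => le_rfl) (fun _ => zero_le_one)
      (fun _ _ => rfl)
    simpa using this

lemma EK2 (k : Fin n) :
    ∫ U, (KK N3 k U)^2 ∂(Measure.pi fun _ : Fin n => ν) ≤
      ((n:ℝ) - 1) * (q * (1 + ((n:ℝ) - 1) * q)) := by
  have e : ∀ U, (KK N3 k U)^2 = ∑ l, bI N3 k l U * (1 + ∑ l' ∈ Finset.univ.erase l, bI N3 k l' U) := by
    intro U
    rw [sq]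
    nth_rw 1 [KK]
    rw [Finset.sum_mul]
    refine Finset.sum_congr rfl fun l _ => ?_
    unfold KK
    rw [← Finset.add_sum_erase _ _ (Finset.mem_univ l), mul_add, mul_add]
    congr 1
    unfold bI; split_ifs <;> simp
  have hb1 : ∀ l (U : Fin n → 𝒳), 0 ≤ ∑ l' ∈ Finset.univ.erase l, bI N3 k l' U := fun l U =>
    Finset.sum_nonneg fun _ _ => bI_nonneg _ _ _
  have hb2 : ∀ l (U : Fin n → 𝒳), ∑ l' ∈ Finset.univ.erase l, bI N3 k l' U ≤ KK N3 k U := fun l U =>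
    Finset.sum_le_sum_of_subset_of_nonneg (Finset.subset_univ _) fun _ _ _ => bI_nonneg _ _ _
  have hm : ∀ l, Measurable fun U : Fin n → 𝒳 => 1 + ∑ l' ∈ Finset.univ.erase l, bI N3 k l' U :=
    fun l => (Finset.measurable_sum _ fun l' _ => G.bI_meas k l').const_add 1
  simp_rw [e]
  have iT : ∀ l, Integrable (fun U : Fin n → 𝒳 => 1 + ∑ l' ∈ Finset.univ.erase l, bI N3 k l' U)
      (Measure.pi fun _ : Fin n => ν) := fun l =>
    bdd_integrable _ _ (hm l) (1 + n) fun U => by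
      have := hb1 l U
      have := hb2 l U
      have := KK_le (N3 := N3) k U
      rw [abs_of_nonneg (by linarith)]; linarith
  rw [integral_finsetSum]
  · rw [← sum_q k]
    refine Finset.sum_le_sum fun l _ => ?_
    by_cases h : l = k
    · simp [h, bI_self]
    · rw [if_neg h]
      refine (G.avg k l h _ (hm l) (1 + n) (fun U => ?_) (fun U => ?_) (fun U x => ?_)).trans ?_
      · have := hb2 l U
        have := KK_le (N3 := N3) k U
        linarith
      · have := hb1 l U
        linarith
      · congr 1
        refine Finset.sum_congr rfl fun l' hl' => ?_
        unfold bI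
        rw [Function.update_of_ne (Finset.ne_of_mem_erase hl'), Function.update_of_ne (Ne.symm h)]
      · refine mul_le_mul_of_nonneg_left ?_ G.hq0
        have iK : Integrable (fun U => KK N3 k U) (Measure.pi fun _ : Fin n => ν) :=
          bdd_integrable _ _ (G.KK_meas k) n fun U => by
            rw [abs_of_nonneg (KK_nonneg k U)]; exact KK_le k U
        have : ∫ U, (1 + ∑ l' ∈ Finset.univ.erase l, bI N3 k l' U) ∂(Measure.pi fun _ : Fin n => ν) ≤
            ∫ U, (1 + KK N3 k U) ∂(Measure.pi fun _ : Fin n => ν) :=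
          integral_mono (iT l) ((integrable_const _).add iK) fun U => by
            have := hb2 l U
            simp only
            linarith
        rw [integral_add (integrable_const _) iK] at this
        simp only [integral_const, probReal_univ, smul_eq_mul, one_mul] at this
        linarith [G.EK k]
  · intro l _
    refine (iT l).bdd_mul (c := 1) (G.bI_meas k l).aestronglyMeasurable (ae_of_all _ fun U => ?_)
    rw [Real.norm_eq_abs, abs_of_nonneg (bI_nonneg _ _ _)]; exact bI_le _ _ _

lemma hI_int (s : Finset (Fin n)) (i j : Fin n) (hij : i ≠ j) (U : Fin n → 𝒳) :
    Integrable (fun x => hI near p s i j U x) ν := by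
  refine bdd_integrable _ _ (hI_meas G.hm measurable_const measurable_id s i j p)
    (wt p (n-1) 0 * (1 + κ)) fun x => (hI_abs G.pack G.p0 G.p1 s i j hij U x).trans ?_
  have := wt_nonneg p (n-1) 0 G.p0 G.p1
  refine mul_le_of_le_one_right (by positivity) ?_
  split_ifs <;> norm_num

lemma ind_integrable (c : ℝ) (z : 𝒳) : Integrable (fun x => c * (if near z x then (1:ℝ) else 0)) ν := by
  refine (bdd_integrable _ _ (ite_meas (rel_meas G.hm measurable_const measurable_id) _ _) 1
    fun x => ?_).const_mul c
  split_ifs <;> simp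

lemma g_abs (s : Finset (Fin n)) (i j : Fin n) (hij : i ≠ j) (U : Fin n → 𝒳) :
    |∫ x, hI near p s i j U x ∂ν| ≤ (wt p (n-1) 0 * (1 + κ)) * p := by
  rw [← G.ind_int _ (U i), ← Real.norm_eq_abs]
  exact norm_integral_le_of_norm_le (G.ind_integrable _ _)
    (ae_of_all _ fun x => hI_abs G.pack G.p0 G.p1 s i j hij U x)

lemma g_diff (i j k : Fin n) (hij : i ≠ j) (hik : i ≠ k) (hjk : j ≠ k) (U : Fin n → 𝒳) :
    |∫ x, hI near p Finset.univ i j U x ∂ν - ∫ x, hI near p (Finset.univ.erase k) i j U x ∂ν| ≤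
      (wt p (n-1) 0 * (1 + κ)) * (2 * (if N3 (U i) (U k) then 1 else 0) +
        (if N3 (U j) (U k) then 1 else 0)) * p := by
  rw [← G.ind_int _ (U i), ← integral_sub (G.hI_int _ i j hij U) (G.hI_int _ i j hij U),
    ← Real.norm_eq_abs]
  exact norm_integral_le_of_norm_le (G.ind_integrable _ _)
    (ae_of_all _ fun x => hI_diff G.pack G.hs G.i1 G.i2 G.i3 G.p0 G.p1 i j k hij hik hjk U x)

lemma hn1 : ((n - 1 : ℕ) : ℝ) = (n:ℝ) - 1 := by
  have := G.hn
  rw [Nat.cast_sub (by omega)]; simp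

lemma Pnn : 0 ≤ 1 - (1 - p)^(n-1) := by
  have := pow_le_one₀ (n := n-1) (by linarith [G.p1] : 0 ≤ 1 - p) (by linarith [G.p0])
  linarith

lemma Phi_diff (k : Fin n) (U : Fin n → 𝒳) :
    |Phi ν near p U - Phik ν near p k U| ≤
      (1 - (1 - p)^(n-1)) * (1 + κ) * (2 + 3 * KK N3 k U) := by
  set w0 := wt p (n-1) 0 with hw0
  have w0n : 0 ≤ w0 := wt_nonneg _ _ _ G.p0 G.p1
  have hP : ((n:ℝ) - 1) * (p * w0) = 1 - (1 - p)^(n-1) := by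
    rw [← G.hn1]; exact wt_zero p (n-1)
  set c := w0 * (1 + κ) * p with hc
  have c0 : 0 ≤ c := by have := G.p0; positivity
  let f : Fin n → ℝ := fun i => (if i = k then 1 else 0) + 2 * bI N3 k i U
  let h : Fin n → ℝ := fun i => (if i = k then 1 else 0) + bI N3 k i U
  have hf0 : ∀ i, 0 ≤ f i := fun i => by
    have := bI_nonneg (N3 := N3) k i U
    show 0 ≤ _ + _
    split_ifs <;> linarith
  have hh0 : ∀ i, 0 ≤ h i := fun i => by
    have := bI_nonneg (N3 := N3) k i U
    show 0 ≤ _ + _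
    split_ifs <;> linarith
  have hterm : ∀ i j : Fin n,
      |(if i ≠ j then ∫ x, hI near p Finset.univ i j U x ∂ν else 0) -
        (if i ≠ j ∧ i ≠ k ∧ j ≠ k then ∫ x, hI near p (Finset.univ.erase k) i j U x ∂ν else 0)| ≤
      c * ((if i ≠ j then f i else 0) + (if i ≠ j then h j else 0)) := by
    intro i j
    by_cases hij : i = j
    · simp [hij]
    rw [if_pos hij, if_pos hij, if_pos hij]
    by_cases hik : i = k
    · rw [if_neg (fun hh => hh.2.1 hik), sub_zero]
      refine (G.g_abs _ i j hij U).trans ?_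
      have : 1 ≤ f i := by
        have := bI_nonneg (N3 := N3) k i U
        show 1 ≤ _ + _
        rw [if_pos hik]; linarith
      have := hh0 j
      show c ≤ _
      nlinarith
    by_cases hjk : j = k
    · rw [if_neg (fun hh => hh.2.2 hjk), sub_zero]
      refine (G.g_abs _ i j hij U).trans ?_
      have : 1 ≤ h j := by
        have := bI_nonneg (N3 := N3) k j U
        show 1 ≤ _ + _
        rw [if_pos hjk]; linarith
      have := hf0 i
      show c ≤ _
      nlinarith
    rw [if_pos ⟨hij, hik, hjk⟩]
    refine (G.g_diff i j k hij hik hjk U).trans (le_of_eq ?_)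
    have b1 : bI N3 k i U = if N3 (U i) (U k) then 1 else 0 := by unfold bI; simp [hik]
    have b2 : bI N3 k j U = if N3 (U j) (U k) then 1 else 0 := by unfold bI; simp [hjk]
    show _ = c * (((if i = k then 1 else 0) + 2 * bI N3 k i U) +
      ((if j = k then 1 else 0) + bI N3 k j U))
    rw [if_neg hik, if_neg hjk, b1, b2, hc]
    ring
  unfold Phi Phik
  rw [← Finset.sum_sub_distrib]
  simp_rw [← Finset.sum_sub_distrib]
  have s1 : ∑ i, f i = 1 + 2 * KK N3 k U := by
    simp only [f]; rw [Finset.sum_add_distrib, ← Finset.mul_sum, Finset.sum_ite_eq']; simp [KK]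
  have s2 : ∑ i, h i = 1 + KK N3 k U := by
    simp only [h]; rw [Finset.sum_add_distrib, Finset.sum_ite_eq']; simp [KK]
  calc _ ≤ ∑ i : Fin n, ∑ j : Fin n, c * ((if i ≠ j then f i else 0) + (if i ≠ j then h j else 0)) := by
        refine (Finset.abs_sum_le_sum_abs _ _).trans (Finset.sum_le_sum fun i _ => ?_)
        exact (Finset.abs_sum_le_sum_abs _ _).trans (Finset.sum_le_sum fun j _ => hterm i j)
    _ = c * (((n:ℝ) - 1) * ∑ i, f i + ((n:ℝ) - 1) * ∑ i, h i) := by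
        simp_rw [← Finset.mul_sum, Finset.sum_add_distrib]
        rw [sum_ne, sum_ne']
    _ = _ := by
        rw [s1, s2, ← hP, hc]; ring

lemma Phi_meas : Measurable (Phi ν near p : (Fin n → 𝒳) → ℝ) := by
  unfold Phi
  refine Finset.measurable_sum _ fun i _ => Finset.measurable_sum _ fun j _ => ?_
  split_ifs
  · exact (hI_meas G.hm (α := (Fin n → 𝒳) × 𝒳) measurable_fst measurable_snd
      Finset.univ i j p).stronglyMeasurable.integral_prod_right.measurable
  · exact measurable_const

lemma Phik_meas (k : Fin n) : Measurable (Phik ν near p k : (Fin n → 𝒳) → ℝ) := by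
  unfold Phik
  refine Finset.measurable_sum _ fun i _ => Finset.measurable_sum _ fun j _ => ?_
  split_ifs
  · exact (hI_meas G.hm (α := (Fin n → 𝒳) × 𝒳) measurable_fst measurable_snd
      (Finset.univ.erase k) i j p).stronglyMeasurable.integral_prod_right.measurable
  · exact measurable_const

omit [IsProbabilityMeasure ν] G in
lemma Phik_upd (k : Fin n) (U : Fin n → 𝒳) (x : 𝒳) :
    Phik ν near p k (Function.update U k x) = Phik ν near p k U := by
  unfold Phik
  refine Finset.sum_congr rfl fun i _ => Finset.sum_congr rfl fun j _ => ?_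
  by_cases h : i ≠ j ∧ i ≠ k ∧ j ≠ k
  · rw [if_pos h, if_pos h]
    refine integral_congr_ae (ae_of_all _ fun y => ?_)
    exact hI_congr (by simp [h.2.1]) (by simp [h.2.2])
      (fun l hl => Function.update_of_ne (Finset.ne_of_mem_erase hl) _ _) y
  · rw [if_neg h, if_neg h]

lemma Phi_bd (U : Fin n → 𝒳) : |Phi ν near p U| ≤ ∑ _i : Fin n, ∑ _j : Fin n, wt p (n-1) 0 * (1 + κ) * p := by
  have c0 : 0 ≤ wt p (n-1) 0 * (1 + κ) * p := by
    have := G.p0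
    have := wt_nonneg p (n-1) 0 G.p0 G.p1
    positivity
  unfold Phi
  refine (Finset.abs_sum_le_sum_abs _ _).trans (Finset.sum_le_sum fun i _ => ?_)
  refine (Finset.abs_sum_le_sum_abs _ _).trans (Finset.sum_le_sum fun j _ => ?_)
  split_ifs with h
  · exact G.g_abs _ i j h U
  · simpa using c0

lemma Phik_bd (k : Fin n) (U : Fin n → 𝒳) :
    |Phik ν near p k U| ≤ ∑ _i : Fin n, ∑ _j : Fin n, wt p (n-1) 0 * (1 + κ) * p := by
  have c0 : 0 ≤ wt p (n-1) 0 * (1 + κ) * p := by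
    have := G.p0
    have := wt_nonneg p (n-1) 0 G.p0 G.p1
    positivity
  unfold Phik
  refine (Finset.abs_sum_le_sum_abs _ _).trans (Finset.sum_le_sum fun i _ => ?_)
  refine (Finset.abs_sum_le_sum_abs _ _).trans (Finset.sum_le_sum fun j _ => ?_)
  split_ifs with h
  · exact G.g_abs _ i j h.1 U
  · simpa using c0

lemma Phi_var (a : ℝ) (ha : ((n:ℝ) - 1) * q ≤ a) :
    ∫ U, (Phi ν near p U - ∫ U, Phi ν near p U ∂(Measure.pi fun _ : Fin n => ν))^2
        ∂(Measure.pi fun _ : Fin n => ν) ≤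
      n * ((1 - (1 - p)^(n-1))^2 * ((1 + κ)^2 * (4 + 12 * a + 9 * (a + a^2)))) := by
  refine (efron_stein ν n _ (fun k => Phik ν near p k) _ G.Phi_meas G.Phi_bd G.Phik_meas
    G.Phik_bd Phik_upd).trans ?_
  set P := 1 - (1 - p)^(n-1) with hP
  have hn0 : 0 ≤ ((n:ℝ) - 1) * q := mul_nonneg (by
    have : (2:ℝ) ≤ n := by exact_mod_cast G.hn
    linarith) G.hq0
  have key : ∀ k : Fin n, ∫ U, (Phi ν near p U - Phik ν near p k U)^2 ∂(Measure.pi fun _ : Fin n => ν) ≤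
      P^2 * ((1 + κ)^2 * (4 + 12 * a + 9 * (a + a^2))) := by
    intro k
    have iK : Integrable (fun U => KK N3 k U) (Measure.pi fun _ : Fin n => ν) :=
      bdd_integrable _ _ (G.KK_meas k) n fun U => by
        rw [abs_of_nonneg (KK_nonneg k U)]; exact KK_le k U
    have iK2 : Integrable (fun U => (KK N3 k U)^2) (Measure.pi fun _ : Fin n => ν) :=
      bdd_integrable _ _ ((G.KK_meas k).pow_const 2) ((n:ℝ)^2) fun U => sq_bdd (by
        rw [abs_of_nonneg (KK_nonneg k U)]; exact KK_le k U)
    have i3 : Integrable (fun U => 4 + (12 * KK N3 k U + 9 * (KK N3 k U)^2))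
        (Measure.pi fun _ : Fin n => ν) :=
      (integrable_const _).add ((iK.const_mul 12).add (iK2.const_mul 9))
    have : ∫ U, (Phi ν near p U - Phik ν near p k U)^2 ∂(Measure.pi fun _ : Fin n => ν) ≤
        ∫ U, P^2 * (1 + κ)^2 * (4 + (12 * KK N3 k U + 9 * (KK N3 k U)^2))
          ∂(Measure.pi fun _ : Fin n => ν) := by
      refine integral_mono (bdd_integrable _ _ ((G.Phi_meas.sub (G.Phik_meas k)).pow_const 2) _
        fun U => sq_bdd ((abs_sub _ _).trans (add_le_add (G.Phi_bd U) (G.Phik_bd k U))))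
        (i3.const_mul _) fun U => ?_
      simp only
      rw [← sq_abs]
      calc _ ≤ (P * (1 + κ) * (2 + 3 * KK N3 k U))^2 := by
            gcongr; exact G.Phi_diff k U
        _ = _ := by ring
    refine this.trans ?_
    have i4 : Integrable (fun U => 12 * KK N3 k U + 9 * (KK N3 k U)^2)
        (Measure.pi fun _ : Fin n => ν) := (iK.const_mul 12).add (iK2.const_mul 9)
    rw [integral_const_mul, integral_add (integrable_const _) i4,
      integral_add (iK.const_mul 12) (iK2.const_mul 9), integral_const_mul, integral_const_mul]
    simp only [integral_const, probReal_univ, smul_eq_mul, one_mul]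
    rw [mul_assoc]
    have e1 := G.EK k
    have e2 := G.EK2 k
    have e3 : ((n:ℝ) - 1) * (q * (1 + ((n:ℝ) - 1) * q)) ≤ a + a^2 := by
      nlinarith
    gcongr ?_ * (?_ * ?_)
    linarith
  calc _ ≤ ∑ _k : Fin n, P^2 * ((1 + κ)^2 * (4 + 12 * a + 9 * (a + a^2))) :=
        Finset.sum_le_sum fun k _ => key k
    _ = _ := by simp

end Geo
end GeoVar


section GeoMain

variable {𝒳 : Type*} [MeasurableSpace 𝒳]
variable {ν : Measure 𝒳} [IsProbabilityMeasure ν] {n κ : ℕ} {near N3 : 𝒳 → 𝒳 → Prop} {p q : ℝ}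

def wA (near : 𝒳 → 𝒳 → Prop) (p : ℝ) (a : Fin n × Fin n) (r : (Fin n → 𝒳) × 𝒳) : ℝ :=
  if a.1 ≠ a.2 then -(wt p (n-1) (Nc near Finset.univ a.1 a.2 r.1) *
    (if near (r.1 a.1) r.2 then 1 else 0)) else 0

def Xf (near : 𝒳 → 𝒳 → Prop) (r : (Fin n → 𝒳) × 𝒳) : ℝ := n - Yc near Finset.univ r.1

def Xf' (near : 𝒳 → 𝒳 → Prop) (a : Fin n × Fin n) (r : (Fin n → 𝒳) × 𝒳) : ℝ :=
  n - Yc near Finset.univ (Function.update r.1 a.2 r.2)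

namespace Geo

variable (G : Geo ν n κ near N3 p q)
include G

lemma wA_meas (a : Fin n × Fin n) : Measurable (wA near p a : (Fin n → 𝒳) × 𝒳 → ℝ) := by
  unfold wA
  split_ifs
  · exact ((wtNc_meas G.hm measurable_fst _ _ _ _ _).mul (ite_meas (rel_meas G.hm
      ((measurable_pi_apply _).comp measurable_fst) measurable_snd) _ _)).neg
  · exact measurable_const

lemma wA_abs (a : Fin n × Fin n) (r : (Fin n → 𝒳) × 𝒳) :
    |wA near p a r| ≤ if a.1 ≠ a.2 then wt p (n-1) 0 * (if near (r.1 a.1) r.2 then 1 else 0)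
      else 0 := by
  unfold wA
  split_ifs with h
  · rw [abs_neg, abs_mul]
    simp only [abs_one]
    exact mul_le_mul_of_nonneg_right (G.wt_bd _ _ _ h) zero_le_one
  · simp
  · simp

lemma wA_bd (a : Fin n × Fin n) (r : (Fin n → 𝒳) × 𝒳) : |wA near p a r| ≤ wt p (n-1) 0 := by
  have := wt_nonneg p (n-1) 0 G.p0 G.p1
  refine (G.wA_abs a r).trans ?_
  split_ifs <;> simp [this]

lemma Xf_meas : Measurable (Xf near : (Fin n → 𝒳) × 𝒳 → ℝ) :=
  (Yc_meas G.hm measurable_fst _).const_sub _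

lemma Xf'_meas (a : Fin n × Fin n) : Measurable (Xf' near a : (Fin n → 𝒳) × 𝒳 → ℝ) :=
  (Yc_meas G.hm (measurable_upd a.2) _).const_sub _

omit G in
lemma nY_mem (U : Fin n → 𝒳) : (n:ℝ) - Yc near Finset.univ U ∈ Set.Icc (0:ℝ) n :=
  ⟨by linarith [Yc_le (near := near) U], by linarith [Yc_nonneg (near := near) Finset.univ U]⟩

lemma wA_mul (a : Fin n × Fin n) (r : (Fin n → 𝒳) × 𝒳) :
    wA near p a r * (Xf' near a r - Xf near r) =
      if a.1 ≠ a.2 then hI near p Finset.univ a.1 a.2 r.1 r.2 else 0 := by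
  unfold wA
  by_cases h1 : a.1 ≠ a.2
  · rw [if_pos h1, if_pos h1]
    have := Yc_update G.hs r.1 a.2 r.2
    have e : Xf' near a r - Xf near r = -(Yc near Finset.univ (Function.update r.1 a.2 r.2)
        - Yc near Finset.univ r.1) := by unfold Xf Xf'; ring
    rw [e, this]; unfold hI; ring
  · rw [if_neg h1, if_neg h1, zero_mul]

lemma H1 (g : ℝ → ℝ) (hg : Continuous g) :
    ∫ r, (Xf near r - (n - n * (1 - (1 - p)^(n-1)))) * g (Xf near r)
        ∂((Measure.pi fun _ : Fin n => ν).prod ν) =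
      ∫ r, ∑ a, wA near p a r * (g (Xf' near a r) - g (Xf near r))
        ∂((Measure.pi fun _ : Fin n => ν).prod ν) := by
  obtain ⟨K, hK⟩ := (isCompact_Icc (a := (0:ℝ)) (b := (n:ℝ))).exists_bound_of_continuousOn
    hg.continuousOn
  have hK' : ∀ U : Fin n → 𝒳, |g (n - Yc near Finset.univ U)| ≤ K := fun U => hK _ (nY_mem U)
  have mF : Measurable fun U : Fin n → 𝒳 => g (n - Yc near Finset.univ U) :=
    hg.measurable.comp ((Yc_meas G.hm measurable_id _).const_sub _)
  have E := G.exch _ mF K hK'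
  have e1 : ∫ r, (Xf near r - (n - n * (1 - (1 - p)^(n-1)))) * g (Xf near r)
        ∂((Measure.pi fun _ : Fin n => ν).prod ν) =
      - ∫ U, (Yc near Finset.univ U - n * (1 - (1 - p)^(n-1))) * g (n - Yc near Finset.univ U)
        ∂(Measure.pi fun _ : Fin n => ν) := by
    rw [← integral_neg, ← G.int_fst]
    refine integral_congr_ae (ae_of_all _ fun r => ?_)
    simp only [Xf]; ring
  rw [e1, E, integral_finsetSum, Fintype.sum_prod_type, ← Finset.sum_neg_distrib]
  · refine Finset.sum_congr rfl fun i _ => ?_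
    rw [← Finset.sum_neg_distrib, ← Finset.add_sum_erase _ _ (Finset.mem_univ i)]
    have : ∫ r, wA near p (i, i) r * (g (Xf' near (i, i) r) - g (Xf near r))
        ∂((Measure.pi fun _ : Fin n => ν).prod ν) = 0 := by simp [wA]
    rw [this, zero_add]
    refine Finset.sum_congr rfl fun j hj => ?_
    rw [← integral_neg]
    refine integral_congr_ae (ae_of_all _ fun r => ?_)
    simp only [Xf, Xf', wA]
    rw [if_pos (Finset.ne_of_mem_erase hj).symm]
    ring
  · intro a _
    refine bdd_integrable _ _ ((G.wA_meas a).mul ((hg.measurable.comp (G.Xf'_meas a)).sub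
      (hg.measurable.comp G.Xf_meas))) (wt p (n-1) 0 * (K + K)) fun r => ?_
    rw [abs_mul]
    exact mul_le_mul (G.wA_bd a r) ((abs_sub _ _).trans (add_le_add (hK' _) (hK' _)))
      (abs_nonneg _) (wt_nonneg p (n-1) 0 G.p0 G.p1)

lemma H2 (u : ℝ → ℝ) (hu : Measurable u) (hu0 : ∀ x, 0 ≤ u x) (K : ℝ)
    (hK : ∀ r : (Fin n → 𝒳) × 𝒳, u (Xf near r) ≤ K) :
    ∫ r, (∑ a, |wA near p a r|) * u (Xf near r) ∂((Measure.pi fun _ : Fin n => ν).prod ν) ≤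
      n * (1 - (1 - p)^(n-1)) * ∫ r, u (Xf near r) ∂((Measure.pi fun _ : Fin n => ν).prod ν) := by
  set w0 := wt p (n-1) 0 with hw0
  have w0n : 0 ≤ w0 := wt_nonneg _ _ _ G.p0 G.p1
  have hP : ((n:ℝ) - 1) * (p * w0) = 1 - (1 - p)^(n-1) := by
    rw [← G.hn1]; exact wt_zero p (n-1)
  have mu : Measurable fun r : (Fin n → 𝒳) × 𝒳 => u (Xf near r) := hu.comp G.Xf_meas
  have bu : ∀ r : (Fin n → 𝒳) × 𝒳, |u (Xf near r)| ≤ K := fun r => by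
    rw [abs_of_nonneg (hu0 _)]; exact hK r
  have I1 : ∀ a : Fin n × Fin n, Integrable (fun r => |wA near p a r| * u (Xf near r))
      ((Measure.pi fun _ : Fin n => ν).prod ν) := fun a =>
    bdd_integrable _ _ ((G.wA_meas a).abs.mul mu) (w0 * K) fun r => by
      rw [abs_mul, abs_abs]
      exact mul_le_mul (G.wA_bd a r) (bu r) (abs_nonneg _) w0n
  simp_rw [Finset.sum_mul]
  rw [integral_finsetSum _ fun a _ => I1 a, Fintype.sum_prod_type]
  set I := ∫ r, u (Xf near r) ∂((Measure.pi fun _ : Fin n => ν).prod ν) with hI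
  have key : ∀ i j : Fin n, ∫ r, |wA near p (i, j) r| * u (Xf near r)
      ∂((Measure.pi fun _ : Fin n => ν).prod ν) ≤ if i ≠ j then w0 * p * I else 0 := by
    intro i j
    by_cases h : i = j
    · simp [h, wA]
    rw [if_pos h]
    have I2 : Integrable (fun r : (Fin n → 𝒳) × 𝒳 =>
        (u (Xf near r) * w0) * (if near (r.1 i) r.2 then 1 else 0))
        ((Measure.pi fun _ : Fin n => ν).prod ν) :=
      bdd_integrable _ _ ((mu.mul_const _).mul (ite_meas (rel_meas G.hm
        ((measurable_pi_apply _).comp measurable_fst) measurable_snd) _ _)) (K * w0 * 1) fun r => by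
        rw [abs_mul, abs_mul, abs_of_nonneg w0n]
        refine mul_le_mul (mul_le_mul_of_nonneg_right (bu r) w0n) ?_ (abs_nonneg _)
          (mul_nonneg ((abs_nonneg _).trans (bu r)) w0n)
        split_ifs <;> simp
    calc _ ≤ ∫ r, (u (Xf near r) * w0) * (if near (r.1 i) r.2 then 1 else 0)
          ∂((Measure.pi fun _ : Fin n => ν).prod ν) := by
          refine integral_mono (I1 _) I2 fun r => ?_
          have := G.wA_abs (i, j) r
          rw [if_pos h] at this
          have := mul_le_mul_of_nonneg_right this (hu0 (Xf near r))
          simp only at this ⊢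
          linarith
      _ = ∫ U, (u (n - Yc near Finset.univ U) * w0) * p ∂(Measure.pi fun _ : Fin n => ν) := by
          rw [integral_prod _ I2]
          refine integral_congr_ae (ae_of_all _ fun U => ?_)
          simp only [Xf]
          rw [G.ind_int]
      _ = w0 * p * I := by
          rw [integral_mul_const, integral_mul_const, hI]
          simp only [Xf]
          rw [G.int_fst (fun U => u (n - Yc near Finset.univ U))]
          ring
  calc _ ≤ ∑ i : Fin n, ∑ j : Fin n, (if i ≠ j then w0 * p * I else 0) :=
        Finset.sum_le_sum fun i _ => Finset.sum_le_sum fun j _ => key i j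
    _ = _ := by
        rw [sum_ne (fun _ => w0 * p * I), ← hP]
        simp
        ring

lemma PhiU (u : ℝ → ℝ) (hu : Measurable u) (hu1 : ∀ x, |u x| ≤ 1) :
    ∫ r, ∑ a, wA near p a r * (Xf' near a r - Xf near r) * u (Xf near r)
        ∂((Measure.pi fun _ : Fin n => ν).prod ν) =
      ∫ U, Phi ν near p U * u (n - Yc near Finset.univ U) ∂(Measure.pi fun _ : Fin n => ν) := by
  have w0n : 0 ≤ wt p (n-1) 0 := wt_nonneg _ _ _ G.p0 G.p1
  rw [integral_prod]
  · refine integral_congr_ae (ae_of_all _ fun U => ?_)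
    simp_rw [G.wA_mul, ← Finset.sum_mul]
    simp only [Xf]
    rw [integral_mul_const]
    congr 1
    unfold Phi
    have ii : ∀ a : Fin n × Fin n, Integrable (fun x => if a.1 ≠ a.2 then
        hI near p Finset.univ a.1 a.2 U x else 0) ν := by
      intro a
      by_cases h : a.1 = a.2
      · simp [h]
      · simp only [ne_eq, h, not_false_eq_true, if_true]
        exact G.hI_int _ _ _ h U
    rw [integral_finsetSum _ fun a _ => ii a, Fintype.sum_prod_type]
    refine Finset.sum_congr rfl fun i _ => Finset.sum_congr rfl fun j _ => ?_
    by_cases h : i = j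
    · simp [h]
    · simp [h]
  · refine integrable_finsetSum _ fun a _ => ?_
    refine bdd_integrable _ _ (((G.wA_meas a).mul ((G.Xf'_meas a).sub
      G.Xf_meas)).mul (hu.comp G.Xf_meas)) (wt p (n-1) 0 * (n + n) * 1) fun r => ?_
    rw [abs_mul, abs_mul]
    have b : ∀ U : Fin n → 𝒳, |(n:ℝ) - Yc near Finset.univ U| ≤ n := fun U => by
      rw [abs_of_nonneg (nY_mem U).1]; exact (nY_mem U).2
    exact mul_le_mul (mul_le_mul (G.wA_bd a r) ((abs_sub _ _).trans (add_le_add (b _) (b _)))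
      (abs_nonneg _) w0n) (hu1 _) (abs_nonneg _) (by positivity)

theorem main (a η σ : ℝ) (ha : ((n:ℝ) - 1) * q ≤ a)
    (hη : (1 + κ)^2 * (4 + 12 * a + 9 * (a + a^2)) ≤ η) (hσ : 0 < σ)
    (hvar : ∫ U, (n - Yc near Finset.univ U - (n - n * (1 - (1 - p)^(n-1))))^2
      ∂(Measure.pi fun _ : Fin n => ν) = σ^2) (t : ℝ) :
    |(Measure.pi fun _ : Fin n => ν).real {U | (n - Yc near Finset.univ U -
        (n - n * (1 - (1 - p)^(n-1)))) / σ ≤ t} - stdGaussCDF t| ≤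
      n * (1 - (1 - p)^(n-1)) / (5 * σ^2) *
        (Real.sqrt (11 * (1 + κ)^2 / σ + 5 * (Real.sqrt η / Real.sqrt n)) +
          2 * (1 + κ) / Real.sqrt σ)^2 := by
  have w0n : 0 ≤ wt p (n-1) 0 := wt_nonneg _ _ _ G.p0 G.p1
  have hn0 : (0:ℝ) < n := by have := G.hn; exact_mod_cast (by omega : 0 < n)
  set P := 1 - (1 - p)^(n-1) with hP
  have P0 : 0 ≤ P := G.Pnn
  have mY : Measurable fun U : Fin n → 𝒳 => (n:ℝ) - Yc near Finset.univ U :=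
    (Yc_meas G.hm measurable_id _).const_sub _
  have bY : ∀ U : Fin n → 𝒳, |(n:ℝ) - Yc near Finset.univ U| ≤ n := fun U => by
    rw [abs_of_nonneg (nY_mem U).1]; exact (nY_mem U).2
  have iY : Integrable (fun U => Yc near Finset.univ U) (Measure.pi fun _ : Fin n => ν) :=
    bdd_integrable _ _ (Yc_meas G.hm measurable_id _) n fun U => by
      rw [abs_of_nonneg (Yc_nonneg _ _)]; exact Yc_le U
  have hm : ∫ r, Xf near r ∂((Measure.pi fun _ : Fin n => ν).prod ν) = n - n * P := by
    unfold Xf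
    rw [G.int_fst (fun U => (n:ℝ) - Yc near Finset.univ U), integral_sub (integrable_const _) iY,
      G.mean]
    simp [hP]
  have hv : ∫ r, (Xf near r - (n - n * P))^2 ∂((Measure.pi fun _ : Fin n => ν).prod ν) = σ^2 := by
    unfold Xf
    rw [G.int_fst (fun U => ((n:ℝ) - Yc near Finset.univ U - (n - n * P))^2)]
    exact hvar
  have bX : ∀ r : (Fin n → 𝒳) × 𝒳, |Xf near r| ≤ n := fun r => bY r.1
  have hΦ : ∫ U, Phi ν near p U ∂(Measure.pi fun _ : Fin n => ν) = σ^2 := by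
    have h1 := G.H1 (fun x => x) continuous_id
    have h2 := G.PhiU (fun _ => 1) measurable_const (fun _ => by simp)
    simp only [mul_one] at h2
    rw [← h2, ← h1, ← hv]
    have iX := bdd_integrable ((Measure.pi fun _ : Fin n => ν).prod ν) _ G.Xf_meas n bX
    have e : ∀ r : (Fin n → 𝒳) × 𝒳, (Xf near r - (n - n * P))^2 =
        (Xf near r - (n - n * P)) * Xf near r - (n - n * P) * (Xf near r - (n - n * P)) :=
      fun r => by ring
    simp_rw [e]
    have i1 : Integrable (fun r : (Fin n → 𝒳) × 𝒳 => (Xf near r - (n - n * P)) * Xf near r)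
        ((Measure.pi fun _ : Fin n => ν).prod ν) :=
      iX.bdd_mul (c := n + |n - n * P|) (G.Xf_meas.sub_const _).aestronglyMeasurable
        (ae_of_all _ fun r => (abs_sub _ _).trans (by linarith [bX r]))
    have i2 : Integrable (fun r : (Fin n → 𝒳) × 𝒳 => (n - n * P) * (Xf near r - (n - n * P)))
        ((Measure.pi fun _ : Fin n => ν).prod ν) := (iX.sub (integrable_const _)).const_mul _
    rw [integral_sub i1 i2, integral_const_mul, integral_sub iX (integrable_const _), hm]
    simp [hP]
  set KΦ := ∑ _i : Fin n, ∑ _j : Fin n, wt p (n-1) 0 * (1 + κ) * p with hKΦ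
  have iΦ : Integrable (fun U => Phi ν near p U) (Measure.pi fun _ : Fin n => ν) :=
    bdd_integrable _ _ G.Phi_meas KΦ G.Phi_bd
  have S : SteinHyp ((Measure.pi fun _ : Fin n => ν).prod ν) (Xf near) (wA near p) (Xf' near)
      (max n (wt p (n-1) 0)) (1 + κ) (n - n * P) (n * P) σ (Real.sqrt η / Real.sqrt n) := by
    refine ⟨G.Xf_meas, fun r => (bX r).trans (le_max_left _ _), G.wA_meas,
      fun a r => (G.wA_bd a r).trans (le_max_right _ _), G.Xf'_meas, fun a r => ?_,
      by positivity, hσ, by positivity, by positivity, hm, hv, G.H1, ?_, ?_⟩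
    · have e : Xf' near a r - Xf near r = -(Yc near Finset.univ (Function.update r.1 a.2 r.2)
        - Yc near Finset.univ r.1) := by unfold Xf Xf'; ring
      rw [e, Yc_update G.hs, abs_neg, abs_le]
      have h1 := Ad_le G.pack (Finset.univ.erase a.2) r.1 r.2
      have h2 := Ad_le G.pack (Finset.univ.erase a.2) r.1 (r.1 a.2)
      have h3 := Ad_nonneg (near := near) (Finset.univ.erase a.2) r.1 r.2
      have h4 := Ad_nonneg (near := near) (Finset.univ.erase a.2) r.1 (r.1 a.2)
      constructor <;> linarith
    · rintro u hu hu0 ⟨K, hK⟩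
      exact G.H2 u hu hu0 K hK
    · intro u hu hu1
      rw [G.PhiU u hu hu1]
      unfold Xf
      rw [G.int_fst (fun U => u (n - Yc near Finset.univ U)), ← integral_const_mul]
      have mu : Measurable fun U : Fin n → 𝒳 => u (n - Yc near Finset.univ U) := hu.comp mY
      have iu := bdd_integrable (Measure.pi fun _ : Fin n => ν) _ mu 1 fun U => hu1 _
      have iΦu : Integrable (fun U => Phi ν near p U * u (n - Yc near Finset.univ U))
          (Measure.pi fun _ : Fin n => ν) :=
        bdd_integrable _ _ (G.Phi_meas.mul mu) (KΦ * 1) fun U => by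
          rw [abs_mul]
          exact mul_le_mul (G.Phi_bd U) (hu1 _) (abs_nonneg _) ((abs_nonneg _).trans (G.Phi_bd U))
      rw [← integral_sub (iu.const_mul _) iΦu]
      have hD : Integrable (fun U => |Phi ν near p U - σ^2|) (Measure.pi fun _ : Fin n => ν) :=
        (iΦ.sub (integrable_const _)).abs
      have b1 : |∫ U, (σ^2 * u (n - Yc near Finset.univ U) -
          Phi ν near p U * u (n - Yc near Finset.univ U)) ∂(Measure.pi fun _ : Fin n => ν)| ≤
          ∫ U, |Phi ν near p U - σ^2| ∂(Measure.pi fun _ : Fin n => ν) := by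
        rw [← Real.norm_eq_abs]
        refine norm_integral_le_of_norm_le hD (ae_of_all _ fun U => ?_)
        rw [← sub_mul, norm_mul, Real.norm_eq_abs, Real.norm_eq_abs, abs_sub_comm]
        exact mul_le_of_le_one_right (abs_nonneg _) (hu1 _)
      refine b1.trans ?_
      have b2 := cs_int (Measure.pi fun _ : Fin n => ν) (fun U => |Phi ν near p U - σ^2|)
        (G.Phi_meas.sub_const _).abs (KΦ + |σ^2|) fun U => by
          rw [abs_abs]
          exact (abs_sub _ _).trans (by linarith [G.Phi_bd U])
      simp only [sq_abs] at b2
      have b3 := G.Phi_var a ha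
      rw [hΦ] at b3
      have hη0 : 0 ≤ η := by
        refine le_trans ?_ hη
        have : 0 ≤ ((n:ℝ) - 1) * q := mul_nonneg (by
          have : (2:ℝ) ≤ n := by exact_mod_cast G.hn
          linarith) G.hq0
        have : 0 ≤ a := this.trans ha
        positivity
      have b4 : (n:ℝ) * (P^2 * ((1 + κ)^2 * (4 + 12 * a + 9 * (a + a^2)))) ≤
          (n * P * (Real.sqrt η / Real.sqrt n))^2 := by
        have : (n * P * (Real.sqrt η / Real.sqrt n))^2 = n * (P^2 * η) := by
          rw [mul_pow, mul_pow, div_pow, Real.sq_sqrt hη0, Real.sq_sqrt hn0.le]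
          field_simp
        rw [this]
        gcongr
      exact abs_le_of_sq_le_sq' (b2.trans (b3.trans b4)) (by positivity) |>.2
  have M := S.main t
  have e : (Measure.pi fun _ : Fin n => ν).real {U | (n - Yc near Finset.univ U -
        (n - n * P)) / σ ≤ t} = ((Measure.pi fun _ : Fin n => ν).prod ν).real
        {r | (Xf near r - (n - n * P)) / σ ≤ t} := by
    have ms : MeasurableSet {U : Fin n → 𝒳 | (n - Yc near Finset.univ U - (n - n * P)) / σ ≤ t} :=
      measurableSet_le ((mY.sub_const _).div_const _) measurable_const
    have := (measurePreserving_fst (μ := Measure.pi fun _ : Fin n => ν) (ν := ν)).measure_preimage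
      ms.nullMeasurableSet
    rw [measureReal_def, measureReal_def, ← this]
    rfl
  rw [e]
  exact M

end Geo
end GeoMain


section Torus

variable {d : ℕ}

def euN (z : Fin d → ℝ) : ℝ := ‖(WithLp.toLp 2 z : EuclideanSpace ℝ (Fin d))‖

lemma euN_eq (z : Fin d → ℝ) : euN z = Real.sqrt (∑ i, |z i|^2) := by
  unfold euN
  rw [EuclideanSpace.norm_eq]
  simp

lemma euN_add (z w : Fin d → ℝ) : euN (z + w) ≤ euN z + euN w := by
  unfold euN; rw [WithLp.toLp_add]; exact norm_add_le _ _

lemma euN_neg (z : Fin d → ℝ) : euN (-z) = euN z := by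
  unfold euN; rw [WithLp.toLp_neg]; exact norm_neg _

lemma euN_cont : Continuous (euN : (Fin d → ℝ) → ℝ) :=
  continuous_norm.comp (PiLp.continuous_toLp 2 _)

def latV (L : ℝ) : (Fin d → ℤ) →+ (Fin d → ℝ) where
  toFun k i := k i * L
  map_zero' := by ext; simp
  map_add' k l := by ext; simp [add_mul]

def TT (L r : ℝ) : Set (Fin d → ℝ) := {z | ∃ k : Fin d → ℤ, euN (z - latV L k) ≤ r}

lemma iInf_round (L : ℝ) (hL : 0 < L) (x : ℝ) : (⨅ k : ℤ, |x - k * L|) = |x - round (x / L) * L| := by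
  have e : ∀ k : ℤ, |x - k * L| = |x / L - k| * L := fun k => by
    rw [← abs_of_pos hL, ← abs_mul, abs_of_pos hL]; congr 1; field_simp
  apply le_antisymm
  · exact ciInf_le ⟨0, by rintro _ ⟨k, rfl⟩; exact abs_nonneg _⟩ _
  · refine le_ciInf fun k => ?_
    rw [e, e]
    exact mul_le_mul_of_nonneg_right (round_le _ _) hL.le

lemma near_iff (L : ℝ) (hL : 0 < L) (r : ℝ) (x y : Fin d → ℝ) :
    torDist L x y ≤ r ↔ x - y ∈ TT L r := by
  unfold torDist
  constructor
  · intro h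
    refine ⟨fun i => round ((x i - y i) / L), ?_⟩
    rw [euN_eq]
    simp_rw [iInf_round L hL] at h
    exact h
  · rintro ⟨k, hk⟩
    rw [euN_eq] at hk
    refine le_trans (Real.sqrt_le_sqrt ?_) hk
    refine Finset.sum_le_sum fun i _ => ?_
    refine pow_le_pow_left₀ (Real.iInf_nonneg fun _ => abs_nonneg _) ?_ 2
    exact ciInf_le ⟨0, by rintro _ ⟨k, rfl⟩; exact abs_nonneg _⟩ (k i)

lemma TT_neg (L r : ℝ) (z : Fin d → ℝ) (h : z ∈ TT L r) : -z ∈ TT L r := by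
  obtain ⟨k, hk⟩ := h
  refine ⟨-k, ?_⟩
  rw [map_neg, ← euN_neg]
  rwa [show -(-z - -latV L k) = z - latV L k by abel]

lemma TT_add (L r s : ℝ) (z w : Fin d → ℝ) (h : z ∈ TT L r) (h' : w ∈ TT L s) :
    z + w ∈ TT L (r + s) := by
  obtain ⟨k, hk⟩ := h
  obtain ⟨l, hl⟩ := h'
  refine ⟨k + l, ?_⟩
  rw [map_add, show z + w - (latV L k + latV L l) = (z - latV L k) + (w - latV L l) by abel]
  exact (euN_add _ _).trans (add_le_add hk hl)

lemma TT_mono (L r s : ℝ) (h : r ≤ s) (z : Fin d → ℝ) (hz : z ∈ TT L r) : z ∈ TT L s := by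
  obtain ⟨k, hk⟩ := hz
  exact ⟨k, hk.trans h⟩

lemma TT_lat (L r : ℝ) (z : Fin d → ℝ) (l : Fin d → ℤ) : latV L l + z ∈ TT L r ↔ z ∈ TT L r := by
  constructor
  · rintro ⟨k, hk⟩
    refine ⟨k - l, ?_⟩
    rwa [map_sub, show z - (latV L k - latV L l) = latV L l + z - latV L k by abel]
  · rintro ⟨k, hk⟩
    refine ⟨k + l, ?_⟩
    rwa [map_add, show latV L l + z - (latV L k + latV L l) = z - latV L k by abel]

lemma TT_meas (L r : ℝ) : MeasurableSet (TT L r : Set (Fin d → ℝ)) := by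
  have : (TT L r : Set (Fin d → ℝ)) = ⋃ k : Fin d → ℤ, {z | euN (z - latV L k) ≤ r} := by
    ext z; simp [TT]
  rw [this]
  refine MeasurableSet.iUnion fun k => ?_
  exact (isClosed_le (euN_cont.comp (continuous_id.sub continuous_const)) continuous_const).measurableSet

def boxc (L : ℝ) (c : Fin d → ℝ) : Set (Fin d → ℝ) := Set.univ.pi fun i => Set.Ico (c i) (c i + L)

lemma boxc_zero (L : ℝ) : boxc L 0 = box d L := by simp [boxc, box]

lemma boxc_meas (L : ℝ) (c : Fin d → ℝ) : MeasurableSet (boxc L c) :=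
  MeasurableSet.univ_pi fun _ => measurableSet_Ico

lemma boxc_fd (L : ℝ) (hL : 0 < L) (c : Fin d → ℝ) :
    IsAddFundamentalDomain ((latV L : (Fin d → ℤ) →+ (Fin d → ℝ)).range) (boxc L c) volume := by
  refine IsAddFundamentalDomain.mk' (boxc_meas L c).nullMeasurableSet fun x => ?_
  choose m hm hu using fun i => existsUnique_add_zsmul_mem_Ico hL (x i) (c i)
  refine ⟨⟨latV L m, m, rfl⟩, ?_, ?_⟩
  · intro i _
    have := hm i
    simp only [zsmul_eq_mul] at this
    show (m i : ℝ) * L + x i ∈ _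
    rwa [add_comm]
  · rintro ⟨_, k, rfl⟩ hk
    have : k = m := by
      ext i
      refine hu i (k i) ?_
      have := hk i (Set.mem_univ i)
      simp only [zsmul_eq_mul]
      rw [add_comm (x i)]
      exact this
    subst this
    rfl

instance latCount (L : ℝ) : Countable ((latV L : (Fin d → ℤ) →+ (Fin d → ℝ)).range) :=
  (Set.countable_range (latV L : (Fin d → ℤ) →+ (Fin d → ℝ))).to_subtype

lemma vol_near (L : ℝ) (hL : 0 < L) (r : ℝ) (x : Fin d → ℝ) :
    volume ({y | x - y ∈ TT L r} ∩ box d L) = volume (TT L r ∩ boxc L (0 : Fin d → ℝ)) := by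
  have h1 := (boxc_fd L hL (0 : Fin d → ℝ)).measure_set_eq (boxc_fd L hL (-x)) (TT_meas L r) (by
    rintro ⟨_, k, rfl⟩
    ext z
    exact TT_lat L r z k)
  rw [h1, ← measure_preimage_add_right volume x]
  congr 1
  ext z
  simp only [Set.mem_preimage, Set.mem_inter_iff, Set.mem_setOf_eq, box, boxc, Set.mem_univ_pi,
    Set.mem_Ico, Pi.add_apply, Pi.neg_apply]
  refine and_congr ?_ (forall_congr' fun i => ?_)
  · constructor
    · intro h
      have := TT_neg L r _ h
      rwa [show -(x - (z + x)) = z by abel] at this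
    · intro h
      have := TT_neg L r _ h
      rwa [show x - (z + x) = -z by abel]
  · constructor <;> rintro ⟨h1, h2⟩ <;> constructor <;> linarith

lemma vol_T_le (L : ℝ) (hL : 0 < L) (r : ℝ) (hr : 0 ≤ r) :
    volume (TT L r ∩ boxc L (0 : Fin d → ℝ)) ≤ ENNReal.ofReal (unitBallVol d * r^d) := by
  have h0 : volume {z : Fin d → ℝ | euN z ≤ r} = ENNReal.ofReal (unitBallVol d * r^d) := by
    have e : {z : Fin d → ℝ | euN z ≤ r} =
        (WithLp.toLp 2) ⁻¹' (closedBall (0 : EuclideanSpace ℝ (Fin d)) r) := by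
      ext z; simp [euN]
    rw [e, (PiLp.volume_preserving_toLp (Fin d)).measure_preimage
      measurableSet_closedBall.nullMeasurableSet, Measure.addHaar_closedBall' _ _ hr,
      ENNReal.ofReal_mul (by unfold unitBallVol; positivity), mul_comm]
    unfold unitBallVol
    rw [ENNReal.ofReal_toReal measure_closedBall_lt_top.ne]
    simp
  rw [← h0, (boxc_fd L hL (0 : Fin d → ℝ)).measure_eq_tsum {z : Fin d → ℝ | euN z ≤ r}]
  refine le_trans (measure_mono ?_) (measure_iUnion_le _)
  rintro z ⟨⟨k, hk⟩, hz⟩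
  refine Set.mem_iUnion.mpr ⟨⟨latV L k, k, rfl⟩, ?_, hz⟩
  refine Set.mem_vadd_set.mpr ⟨z - latV L k, hk, ?_⟩
  show latV L k + (z - latV L k) = z
  abel

lemma vol_box (L : ℝ) : volume (box d L) = ENNReal.ofReal L ^ d := by
  unfold box
  rw [Real.volume_pi_Ico]; simp

lemma sideLen_pos (n : ℕ) (hn : 0 < n) : 0 < sideLen d n := by
  unfold sideLen; positivity

lemma sideLen_pow (n : ℕ) (hd : d ≠ 0) : sideLen d n ^ d = n := by
  unfold sideLen
  exact Real.rpow_inv_natCast_pow (by positivity) hd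

lemma uni_apply (L : ℝ) (hL : 0 < L) (s : Set (Fin d → ℝ)) (hs : MeasurableSet s) :
    (uniformBox d L).real s = (volume (s ∩ box d L)).toReal / L^d := by
  unfold uniformBox
  rw [measureReal_def, Measure.smul_apply, Measure.restrict_apply hs]
  rw [ENNReal.smul_def, smul_eq_mul, ENNReal.toReal_mul]
  simp [hL.le]
  rw [div_eq_inv_mul]

lemma uni_prob (L : ℝ) (hL : 0 < L) : IsProbabilityMeasure (uniformBox d L) := by
  constructor
  unfold uniformBox
  rw [Measure.smul_apply, Measure.restrict_apply MeasurableSet.univ, Set.univ_inter, vol_box,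
    ENNReal.smul_def, smul_eq_mul, ENNReal.coe_inv (by positivity), ENNReal.coe_pow]
  have : ENNReal.ofReal L = (L.toNNReal : ℝ≥0∞) := rfl
  rw [this]
  refine ENNReal.inv_mul_cancel ?_ ?_
  · simp [hL]
  · simp

end Torus


section Kappa

variable {d : ℕ}

lemma kappa_bdd (d : ℕ) : BddAbove {k : ℕ | ∃ c : Fin k → EuclideanSpace ℝ (Fin d),
    (∀ i, (Metric.closedBall (c i) 1 ∩ Metric.closedBall 0 1).Nonempty) ∧
    Pairwise fun i j => Disjoint (Metric.closedBall (c i) 1) (Metric.closedBall (c j) 1)} := by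
  refine ⟨5 ^ d, ?_⟩
  rintro k ⟨c, h1, h2⟩
  have hsep : ∀ i j, i ≠ j → 1 ≤ ‖c i - c j‖ := by
    intro i j hij
    by_contra h
    rw [not_le] at h
    refine Set.disjoint_left.mp (h2 hij) (mem_closedBall_self zero_le_one) ?_
    rw [mem_closedBall, dist_eq_norm]; exact h.le
  have hinj : Function.Injective c := by
    intro i j hij
    by_contra hne
    have := hsep i j hne
    rw [hij, sub_self, norm_zero] at this
    linarith
  have := Besicovitch.card_le_of_separated (Finset.univ.image c) (by
    intro x hx
    obtain ⟨i, -, rfl⟩ := Finset.mem_image.mp hx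
    obtain ⟨z, hz1, hz2⟩ := h1 i
    rw [mem_closedBall] at hz1 hz2
    rw [← dist_zero_right]
    have := dist_triangle_left (c i) 0 z
    linarith) (by
    intro x hx y hy hxy
    obtain ⟨i, -, rfl⟩ := Finset.mem_image.mp hx
    obtain ⟨j, -, rfl⟩ := Finset.mem_image.mp hy
    exact hsep i j fun e => hxy (by rw [e]))
  rw [Finset.card_image_of_injective _ hinj] at this
  simpa using this

lemma le_kappa {k : ℕ} (c : Fin k → EuclideanSpace ℝ (Fin d)) (h1 : ∀ i, ‖c i‖ ≤ 2)
    (h2 : ∀ i j, i ≠ j → 2 < ‖c i - c j‖) : k ≤ kappa d := by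
  refine le_csSup (kappa_bdd d) ⟨c, fun i => ?_, fun i j hij => ?_⟩
  · refine ⟨(2:ℝ)⁻¹ • c i, ?_, ?_⟩
    · rw [mem_closedBall, dist_eq_norm, show (2:ℝ)⁻¹ • c i - c i = (-(2:ℝ)⁻¹) • c i by module, norm_smul]
      have := h1 i
      norm_num
      linarith
    · rw [mem_closedBall, dist_zero_right, norm_smul]
      have := h1 i
      norm_num
      linarith
  · refine closedBall_disjoint_closedBall ?_
    rw [dist_eq_norm]
    linarith [h2 i j hij]

lemma two_le_kappa (hd : 1 ≤ d) : 2 ≤ kappa d := by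
  set e : EuclideanSpace ℝ (Fin d) := EuclideanSpace.single (⟨0, hd⟩ : Fin d) 1 with he
  have hn : ‖e‖ = 1 := by rw [he]; simp
  refine le_kappa ![(2:ℝ) • e, (-2:ℝ) • e] ?_ ?_
  · intro i
    fin_cases i <;> simp [norm_smul, hn]
  · have h4 : ∀ v : EuclideanSpace ℝ (Fin d), v = (4:ℝ) • e ∨ v = (-4:ℝ) • e → 2 < ‖v‖ := by
      rintro v (rfl | rfl) <;> rw [norm_smul, hn] <;> norm_num
    intro i j hij
    fin_cases i <;> fin_cases j
    · exact absurd rfl hij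
    · refine h4 _ (Or.inl ?_)
      show (2:ℝ) • e - (-2:ℝ) • e = _
      module
    · refine h4 _ (Or.inr ?_)
      show (-2:ℝ) • e - (2:ℝ) • e = _
      module
    · exact absurd rfl hij

lemma pack_torus (L : ℝ) (hL : 0 < L) (ρ : ℝ) (hρ : 0 < ρ) {n : ℕ} (x : Fin d → ℝ)
    (U : Fin n → Fin d → ℝ) (t : Finset (Fin n))
    (h1 : ∀ i ∈ t, torDist L (U i) x ≤ ρ)
    (h2 : ∀ i ∈ t, ∀ j ∈ t, j ≠ i → ¬ torDist L (U i) (U j) ≤ ρ) : t.card ≤ kappa d := by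
  simp only [near_iff L hL] at h1 h2
  let f := t.equivFin.symm
  choose k hk using fun a : Fin t.card => h1 (f a).1 (f a).2
  let z : Fin t.card → Fin d → ℝ := fun a => U (f a).1 - x - latV L (k a)
  have hz : ∀ a, euN (z a) ≤ ρ := hk
  have hzz : ∀ a b, a ≠ b → ρ < euN (z a - z b) := by
    intro a b hab
    by_contra h
    rw [not_lt] at h
    refine h2 (f a).1 (f a).2 (f b).1 (f b).2 (fun e => hab ?_) ⟨k a - k b, ?_⟩
    · exact (f.injective (Subtype.ext e)).symm
    · rw [map_sub]
      have : U (f a).1 - U (f b).1 - (latV L (k a) - latV L (k b)) = z a - z b := by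
        simp only [z]; abel
      rwa [this]
  refine le_kappa (fun a => (2 / ρ) • (WithLp.toLp 2 (z a) : EuclideanSpace ℝ (Fin d))) ?_ ?_
  · intro a
    rw [norm_smul, Real.norm_eq_abs, abs_of_pos (by positivity)]
    calc 2 / ρ * euN (z a) ≤ 2 / ρ * ρ := mul_le_mul_of_nonneg_left (hz a) (by positivity)
      _ = 2 := by field_simp
  · intro a b hab
    rw [← smul_sub, norm_smul, Real.norm_eq_abs, abs_of_pos (by positivity), ← WithLp.toLp_sub]
    calc (2:ℝ) = 2 / ρ * ρ := by field_simp
      _ < 2 / ρ * euN (z a - z b) := mul_lt_mul_of_pos_left (hzz a b hab) (by positivity)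

lemma eta_ge (n : ℕ) (hn : 4 ≤ n) (hd : 1 ≤ d) (ρ : ℝ) (hρ : 0 < ρ)
    (hphi : max ((3 : ℝ) ^ d) (2 ^ (d + 1) + 1) * phi d ρ < n) :
    (1 + (kappa d : ℝ))^2 * (4 + 12 * (3^d * phi d ρ) +
      9 * (3^d * phi d ρ + (3^d * phi d ρ)^2)) ≤ etaS d n ρ := by
  have hκ : (2:ℝ) ≤ kappa d := by exact_mod_cast two_le_kappa hd
  have hn' : (4:ℝ) ≤ n := by exact_mod_cast hn
  have φ0 : 0 ≤ phi d ρ := by unfold phi unitBallVol; positivity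
  have h1 : (3:ℝ)^d * phi d ρ < n :=
    (mul_le_mul_of_nonneg_right (le_max_left _ _) φ0).trans_lt hphi
  have h2 : ((2:ℝ)^(d+1) + 1) * phi d ρ < n :=
    (mul_le_mul_of_nonneg_right (le_max_right _ _) φ0).trans_lt hphi
  unfold etaS
  set φ := phi d ρ
  have e9 : (9:ℝ)^d = 3^d * 3^d := by rw [← mul_pow]; norm_num
  have t1 : (2:ℝ) ≤ 2^d := by
    calc (2:ℝ) = 2^1 := by norm_num
      _ ≤ 2^d := pow_le_pow_right₀ (by norm_num) hd
  set a := (3:ℝ)^d * φ with ha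
  have a0 : 0 ≤ a := by positivity
  set κ : ℝ := (kappa d : ℝ)
  have r1 : 2 ≤ (2 * (n:ℝ) - a) / (n - a) := by
    rw [le_div_iff₀ (by linarith)]; linarith
  have r2 : 0 ≤ (2 * (n:ℝ) - (2^(d+1) + 1) * φ) / (n - (2^(d+1) + 1) * φ) :=
    div_nonneg (by linarith) (by linarith)
  have r3 : 4 ≤ (4 * (n:ℝ) - 2) / (n - 1) := by
    rw [le_div_iff₀ (by linarith)]; linarith
  have s1 : 1 + 3 * a + 2 * a^2 ≤ 1 + (2^d + 1) * 3^d * φ +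
      ((2 * (n:ℝ) - a) / (n - a)) * 9^d * φ^2 := by
    have q1 : (2^d + 1) * 3^d * φ = (2^d + 1) * a := by rw [ha]; ring
    have q2 : ((2 * (n:ℝ) - a) / (n - a)) * 9^d * φ^2 = ((2 * (n:ℝ) - a) / (n - a)) * a^2 := by
      rw [ha, e9]; ring
    rw [q1, q2]
    have := mul_le_mul_of_nonneg_right r1 (sq_nonneg a)
    have := mul_le_mul_of_nonneg_right t1 a0
    linarith
  have s2 : 2 * a + 4 ≤ (2^d + 2 * 3^d + 3) * φ + (2^(d+1) + 1) *
      ((2 * (n:ℝ) - (2^(d+1) + 1) * φ) / (n - (2^(d+1) + 1) * φ)) * φ^2 +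
      (4 * (n:ℝ) - 2) / (n - 1) := by
    have q1 : (2^d + 2 * 3^d + 3) * φ = 2 * a + (2^d + 3) * φ := by rw [ha]; ring
    have q2 : 0 ≤ (2^d + 3) * φ := by positivity
    have q3 : 0 ≤ (2^(d+1) + 1) *
      ((2 * (n:ℝ) - (2^(d+1) + 1) * φ) / (n - (2^(d+1) + 1) * φ)) * φ^2 := by positivity
    linarith
  have s3 := mul_le_mul_of_nonneg_left s1 (by positivity : 0 ≤ 2 * (1 + 2 * κ)^2)
  have s4 := mul_le_mul_of_nonneg_left s2 (by positivity : 0 ≤ (1 + κ)^2 / 2)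
  refine le_trans ?_ (add_le_add s3 s4)
  obtain ⟨b, hb⟩ : ∃ b, κ = 2 + b := ⟨κ - 2, by ring⟩
  have b0 : 0 ≤ b := by linarith
  rw [hb]
  have f1 : 0 ≤ 32 - 30 * a + 19 * a^2 := by nlinarith [sq_nonneg (a - 15/19)]
  have f2 : 0 ≤ b * (28 + 26 * a^2) := by positivity
  have f3 : 0 ≤ b^2 * (6 + 4 * a + 7 * a^2) := by positivity
  linarith
end Kappa


section Final

variable {d : ℕ}

lemma ae_box (n : ℕ) (hn : 0 < n) :
    ∀ᵐ ω ∂(binppLaw d n), ∀ i, ω i ∈ box d (sideLen d n) := by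
  haveI := uni_prob (d := d) _ (sideLen_pos (d := d) n hn)
  unfold binppLaw
  rw [ae_all_iff]
  intro i
  refine (measurePreserving_eval (fun _ : Fin n => uniformBox d (sideLen d n)) i).quasiMeasurePreserving.ae
    (p := fun y => y ∈ box d (sideLen d n)) ?_
  unfold uniformBox
  refine Measure.ae_smul_measure (ae_restrict_mem ?_) _
  exact MeasurableSet.univ_pi fun _ => measurableSet_Ico

lemma ae_inj (n : ℕ) (hn : 0 < n) (hd : 1 ≤ d) :
    ∀ᵐ ω ∂(binppLaw d n), ∀ i j, i ≠ j → ω i ≠ ω j := by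
  haveI := uni_prob (d := d) _ (sideLen_pos (d := d) n hn)
  haveI : Nonempty (Fin d) := ⟨⟨0, hd⟩⟩
  unfold binppLaw
  rw [ae_all_iff]
  intro i
  rw [ae_all_iff]
  intro j
  by_cases hij : i = j
  · simp [hij]
  simp only [ne_eq, hij, not_false_eq_true, forall_true_left]
  have ms : MeasurableSet {ω : Fin n → Fin d → ℝ | ω i = ω j} :=
    measurableSet_eq_fun (measurable_pi_apply i) (measurable_pi_apply j)
  rw [ae_iff]
  simp only [not_not]
  rw [← (mp_upd (uniformBox d (sideLen d n)) j).measure_preimage ms.nullMeasurableSet]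
  refine (Measure.measure_prod_null ((measurable_upd j) ms)).mpr (ae_of_all _ fun U => ?_)
  have e : (Prod.mk U ⁻¹' ((fun q : (Fin n → Fin d → ℝ) × (Fin d → ℝ) =>
      Function.update q.1 j q.2) ⁻¹' {ω | ω i = ω j})) = {U i} := by
    ext y
    simp [Function.update_of_ne hij, eq_comm]
  beta_reduce
  rw [e]
  have ac : uniformBox d (sideLen d n) ≪ volume := by
    unfold uniformBox
    exact (Measure.smul_absolutelyContinuous).trans Measure.restrict_le_self.absolutelyContinuous
  exact ac (measure_singleton _)

lemma isol_eq (n : ℕ) (hn : 0 < n) (ρ : ℝ) (hρ : 0 < ρ) (ω : Fin n → Fin d → ℝ)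
    (hb : ∀ i, ω i ∈ box d (sideLen d n)) (hi : ∀ i j, i ≠ j → ω i ≠ ω j) :
    isolCount d n ρ ω =
      n - Yc (fun x y : Fin d → ℝ => torDist (sideLen d n) x y ≤ ρ) Finset.univ ω := by
  have hL := sideLen_pos (d := d) n hn
  have key : ∀ i, (Set.range ω ∩ torBall (sideLen d n) (ω i) ρ = {ω i}) ↔
      isoP (fun x y : Fin d → ℝ => torDist (sideLen d n) x y ≤ ρ) Finset.univ ω i := by
    intro i
    constructor
    · intro h l _ hl hnear
      have : ω l ∈ ({ω i} : Set (Fin d → ℝ)) := by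
        rw [← h]
        exact ⟨⟨l, rfl⟩, hb l, hnear⟩
      exact hi l i hl this
    · intro h
      ext y
      constructor
      · rintro ⟨⟨l, rfl⟩, _, hd⟩
        by_cases hl : l = i
        · rw [hl]; rfl
        · exact absurd hd (h l (Finset.mem_univ _) hl)
      · rintro rfl
        refine ⟨⟨i, rfl⟩, hb i, ?_⟩
        rw [near_iff _ hL]
        refine ⟨0, ?_⟩
        simp only [sub_self, map_zero]
        simpa [euN] using hρ.le
  unfold isolCount Yc
  simp only [key]
  have : (n:ℝ) = ∑ i : Fin n, (1:ℝ) := by simp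
  rw [this, ← Finset.sum_sub_distrib]
  refine Finset.sum_congr rfl fun i _ => ?_
  split_ifs <;> simp

lemma torus_geo (n : ℕ) (hn : 4 ≤ n) (hd : 1 ≤ d) (ρ : ℝ) (hρ : 0 < ρ) :
    Geo (uniformBox d (sideLen d n)) n (kappa d)
      (fun x y => torDist (sideLen d n) x y ≤ ρ) (fun x y => torDist (sideLen d n) x y ≤ 3 * ρ)
      ((volume (TT (sideLen d n) ρ ∩ boxc (sideLen d n) (0 : Fin d → ℝ))).toReal / n)
      (3^d * phi d ρ / n) := by
  have hn0 : 0 < n := by omega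
  have hL := sideLen_pos (d := d) n hn0
  have hLd : sideLen d n ^ d = n := sideLen_pow n (by omega)
  set L := sideLen d n
  have φ0 : 0 ≤ phi d ρ := by unfold phi unitBallVol; positivity
  have meas : ∀ r : ℝ, MeasurableSet {q : (Fin d → ℝ) × (Fin d → ℝ) | torDist L q.1 q.2 ≤ r} := by
    intro r
    simp only [near_iff L hL]
    exact (measurable_fst.sub measurable_snd) (TT_meas L r)
  have m1 : ∀ (r : ℝ) (x : Fin d → ℝ), MeasurableSet {y : Fin d → ℝ | x - y ∈ TT L r} := fun r x =>
    (measurable_const.sub measurable_id) (TT_meas L r)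
  have hs : ∀ (r : ℝ) (x y : Fin d → ℝ), torDist L x y ≤ r → torDist L y x ≤ r := by
    intro r x y h
    rw [near_iff L hL] at h ⊢
    have := TT_neg _ _ _ h
    rwa [neg_sub] at this
  have tri : ∀ (r s : ℝ) (x y z : Fin d → ℝ), torDist L x y ≤ r → torDist L y z ≤ s →
      torDist L x z ≤ r + s := by
    intro r s x y z h h'
    rw [near_iff L hL] at h h' ⊢
    have := TT_add _ _ _ _ _ h h'
    rwa [sub_add_sub_cancel] at this
  refine ⟨by omega, meas _, meas _, hs ρ, ?_, ?_, ?_, ?_, ?_, by positivity, ?_⟩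
  · intro x y h
    exact le_trans h (by linarith)
  · intro x y z h h'
    exact (tri _ _ _ _ _ h h').trans (by linarith)
  · intro x y z t h h' h''
    exact (tri _ _ _ _ _ (tri _ _ _ _ _ h h') h'').trans (by linarith)
  · intro x
    simp only [near_iff L hL]
    rw [uni_apply L hL _ (m1 _ _), vol_near L hL, hLd]
  · intro x
    have e : {y : Fin d → ℝ | torDist L y x ≤ 3 * ρ} = {y | x - y ∈ TT L (3 * ρ)} := by
      ext y
      simp only [Set.mem_setOf_eq]
      rw [← near_iff L hL]
      exact ⟨hs _ _ _, hs _ _ _⟩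
    rw [e, uni_apply L hL _ (m1 _ _), vol_near L hL, hLd]
    gcongr
    refine ENNReal.toReal_le_of_le_ofReal (by positivity) ?_
    refine (vol_T_le L hL (3 * ρ) (by positivity)).trans (le_of_eq ?_)
    congr 1
    unfold phi
    rw [mul_pow]; ring
  · intro x U t h1 h2
    exact pack_torus L hL ρ hρ x U t h1 h2

end Final


/-- Theorem 2.2 (Goldstein–Penrose): normal approximation for the number of isolated points. -/
theorem isolated_points_normal_approximation
    (d n : ℕ) (hd : 1 ≤ d) (hn : 4 ≤ n) (ρ : ℝ) (hρ : 0 < ρ)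
    (hphi : max ((3 : ℝ) ^ d) (2 ^ (d + 1) + 1) * phi d ρ < n)
    (hvar : 0 < variance (isolCount d n ρ) (binppLaw d n)) :
    kolDist (binppLaw d n) (isolCount d n ρ) ≤
      ((n : ℝ) - ∫ ω, isolCount d n ρ ω ∂binppLaw d n) /
          (5 * variance (isolCount d n ρ) (binppLaw d n)) *
        (Real.sqrt
            (11 * ((1 : ℝ) + kappa d) ^ 2 /
                Real.sqrt (variance (isolCount d n ρ) (binppLaw d n)) +
              5 * Real.sqrt (etaS d n ρ) / Real.sqrt n) +
          2 * ((1 : ℝ) + kappa d) /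
            Real.sqrt (Real.sqrt (variance (isolCount d n ρ) (binppLaw d n)))) ^ 2 := by
  have hn0 : 0 < n := by omega
  have hn0' : (0:ℝ) < n := by exact_mod_cast hn0
  haveI := uni_prob (d := d) _ (sideLen_pos (d := d) n hn0)
  have G := torus_geo n hn hd ρ hρ
  set near : (Fin d → ℝ) → (Fin d → ℝ) → Prop := fun x y => torDist (sideLen d n) x y ≤ ρ with hnear
  set p := (volume (TT (sideLen d n) ρ ∩ boxc (sideLen d n) (0 : Fin d → ℝ))).toReal / n with hp
  have φ0 : 0 ≤ phi d ρ := by unfold phi unitBallVol; positivity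
  have hae : isolCount d n ρ =ᵐ[binppLaw d n] fun ω => n - Yc near Finset.univ ω := by
    filter_upwards [ae_box (d := d) n hn0, ae_inj (d := d) n hn0 hd] with ω h1 h2
    exact isol_eq n hn0 ρ hρ ω h1 h2
  have mY : Measurable fun U : Fin n → Fin d → ℝ => (n:ℝ) - Yc near Finset.univ U :=
    (Yc_meas G.hm measurable_id _).const_sub _
  have hmean : ∫ ω, isolCount d n ρ ω ∂binppLaw d n = n - n * (1 - (1 - p)^(n-1)) := by
    rw [integral_congr_ae hae]
    have iY : Integrable (fun U => Yc near Finset.univ U) (binppLaw d n) := by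
      unfold binppLaw
      exact bdd_integrable _ _ (Yc_meas G.hm measurable_id _) n fun U => by
        rw [abs_of_nonneg (Yc_nonneg _ _)]; exact Yc_le U
    unfold binppLaw at iY ⊢
    rw [integral_sub (integrable_const _) iY, G.mean]
    simp
  have hv : variance (isolCount d n ρ) (binppLaw d n) =
      ∫ U, (n - Yc near Finset.univ U - (n - n * (1 - (1 - p)^(n-1))))^2 ∂binppLaw d n := by
    rw [variance_congr hae, variance_eq_integral mY.aemeasurable, ← integral_congr_ae hae, hmean]
  set σ := Real.sqrt (variance (isolCount d n ρ) (binppLaw d n)) with hσ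
  have σ0 : 0 < σ := Real.sqrt_pos.mpr hvar
  have hσ2 : variance (isolCount d n ρ) (binppLaw d n) = σ^2 := (Real.sq_sqrt hvar.le).symm
  have M := G.main (3^d * phi d ρ) (etaS d n ρ) σ (by
      rw [mul_div_assoc', div_le_iff₀ hn0']
      have : 0 ≤ (3:ℝ)^d * phi d ρ := by positivity
      nlinarith) (eta_ge n hn hd ρ hρ hphi) σ0 (by
      rw [← hσ2, hv]; rfl)
  refine ciSup_le fun t => ?_
  have hset : (binppLaw d n) {ω | (isolCount d n ρ ω - ∫ x, isolCount d n ρ x ∂binppLaw d n) / σ ≤ t} =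
      (binppLaw d n) {U | (n - Yc near Finset.univ U - (n - n * (1 - (1 - p)^(n-1)))) / σ ≤ t} := by
    refine measure_congr ?_
    filter_upwards [hae] with ω hω
    refine propext ?_
    show (isolCount d n ρ ω - _) / σ ≤ t ↔ _
    rw [hω, hmean]
    rfl
  rw [hset, hmean, hσ2, mul_div_assoc 5, sub_sub_cancel]
  exact M t

end
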